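/- arXiv:1902.04741 — 2 statements merged into one kernel-verified Lean document; each statement's English description precedes it below -/
import Mathlib

section
/- Let f : Xⁿ → ℝ be a function and g_1, ..., g_n : Xⁿ → ℝ≥0 such that f(x) − f(y) ≤ ∑_{i=1}^n g_i(x)·1[x_i ≠ y_i] for all x, y ∈ Xⁿ, with sup_x ∑_i g_i(x)² ≤ σ². Then for independent random variables X = (X_1,...,X_n), Pr[|f(X) − E f(X)| > α] ≤ 2·exp(−α²/(2σ²)). (Talagrand's convex-distance concentration inequality in this self-bounding form.) -/
open MeasureTheory Classical

/-!
Maurey's infimum-convolution method for Marton's weak transport cost. To a function `F` on the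
product space attach a version `Q F x`, built one coordinate at a time, of the infimum over
probability measures `p` of `∫ F dp + (∑ᵢ p {y | yᵢ ≠ xᵢ}²) / 2`. Then
`∫ exp (Q F) ≤ exp (∫ F)` and `∫ exp (-F) ≤ exp (-∫ Q F)`: on one factor both follow from scalar
inequalities, and they tensorize because `Q` commutes, up to an inequality, with averaging over the
remaining coordinates. The stability condition gives `F - σ² / 2 ≤ Q F`, so these two bounds control
the moment generating function of `F - ∫ F` from both sides, and Chernoff's bound concludes.
-/

universe u

open Filter ProbabilityTheory
open scoped NNReal

namespace Talagrand

section MinMix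

/-- The minimum over `t ∈ [0, 1]` of `(1 - t) * s + t ^ 2 / 2`: the cheapest way to move a
proportion `t` of the mass from a point of value `s` to a point of value `0` at cost `t ^ 2 / 2`.
It is encoded by its minimizer, the projection of `s` to `[0, 1]`. -/
noncomputable def minMix (s : ℝ) : ℝ :=
  (1 - max 0 (min 1 s)) * s + max 0 (min 1 s) ^ 2 / 2

lemma measurable_minMix : Measurable minMix := by
  unfold minMix
  fun_prop

lemma exists_minMix_eq (s : ℝ) : ∃ t ∈ Set.Icc (0 : ℝ) 1, minMix s = (1 - t) * s + t ^ 2 / 2 :=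
  ⟨max 0 (min 1 s), ⟨le_max_left _ _, max_le zero_le_one (min_le_left _ _)⟩, rfl⟩

lemma minMix_of_nonpos {s : ℝ} (hs : s ≤ 0) : minMix s = s := by
  simp [minMix, hs, hs.trans zero_le_one]

lemma minMix_of_mem_Icc {s : ℝ} (hs : s ∈ Set.Icc (0 : ℝ) 1) : minMix s = s - s ^ 2 / 2 := by
  simp only [minMix, min_eq_right hs.2, max_eq_right hs.1]
  ring

lemma minMix_of_one_le {s : ℝ} (hs : 1 ≤ s) : minMix s = 1 / 2 := by
  simp [minMix, hs]

lemma minMix_le (s : ℝ) {t : ℝ} (ht : t ∈ Set.Icc (0 : ℝ) 1) :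
    minMix s ≤ (1 - t) * s + t ^ 2 / 2 := by
  obtain ⟨ht₀, ht₁⟩ := ht
  rcases le_total s 0 with hs | hs
  · rw [minMix_of_nonpos hs]
    nlinarith
  rcases le_total s 1 with hs' | hs'
  · rw [minMix_of_mem_Icc ⟨hs, hs'⟩]
    nlinarith [sq_nonneg (s - t)]
  · rw [minMix_of_one_le hs']
    nlinarith

lemma sub_sq_div_two_le_minMix {c s r : ℝ} (hs : c ≤ s) (hr : c ≤ r) :
    c - r ^ 2 / 2 ≤ minMix s := by
  obtain ⟨t, ⟨ht₀, ht₁⟩, h⟩ := exists_minMix_eq s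
  calc c - r ^ 2 / 2 ≤ c - t * r + t ^ 2 / 2 := by linarith [sq_nonneg (t - r)]
    _ ≤ (1 - t) * c + t ^ 2 / 2 := by linarith [mul_le_mul_of_nonneg_left hr ht₀]
    _ ≤ minMix s := by linarith [mul_le_mul_of_nonneg_left hs (sub_nonneg.2 ht₁)]

lemma exp_minMix_le_one_add {s : ℝ} (hs : 0 ≤ s) : Real.exp (minMix s) ≤ 1 + s := by
  rw [← Real.le_log_iff_exp_le (by positivity)]
  rcases le_total s 1 with hs' | hs'
  · have h : s - s ^ 2 / 2 ≤ 2 * s / (s + 2) := by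
      rw [le_div_iff₀ (by positivity)]
      nlinarith [pow_nonneg hs 3]
    rw [minMix_of_mem_Icc ⟨hs, hs'⟩]
    exact h.trans (Real.le_log_one_add_of_nonneg hs)
  · calc minMix s = 1 / 2 := minMix_of_one_le hs'
      _ ≤ Real.log 2 := by linarith [Real.log_two_gt_d9]
      _ ≤ Real.log (1 + s) := Real.log_le_log two_pos (by linarith)

lemma exp_neg_le_one_sub_minMix {s : ℝ} (hs : 0 ≤ s) : Real.exp (-s) ≤ 1 - minMix s := by
  rw [Real.exp_neg]
  rcases le_total s 1 with hs' | hs'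
  · have hpos : 0 < 1 + s + s ^ 2 / 2 := by positivity
    calc (Real.exp s)⁻¹ ≤ (1 + s + s ^ 2 / 2)⁻¹ :=
          inv_anti₀ hpos (Real.quadratic_le_exp_of_nonneg hs)
      _ ≤ 1 - (s - s ^ 2 / 2) := by
          rw [inv_le_iff_one_le_mul₀ hpos]
          nlinarith [pow_nonneg hs 4]
      _ = 1 - minMix s := by rw [minMix_of_mem_Icc ⟨hs, hs'⟩]
  · calc (Real.exp s)⁻¹ ≤ 2⁻¹ := inv_anti₀ two_pos (by linarith [Real.add_one_le_exp s])
      _ = 1 - minMix s := by rw [minMix_of_one_le hs']; norm_num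

end MinMix

section BoundedMeasurable

variable {X Y : Type*} [MeasurableSpace X] [MeasurableSpace Y] {μ : Measure X} {ν : Measure Y}

/-- Bounded measurable real functions: the class in which every function below lives, so that no
integral or essential infimum takes a junk value. -/
structure IsBoundedMeasurable (f : X → ℝ) : Prop where
  measurable : Measurable f
  exists_bound : ∃ C, ∀ x, |f x| ≤ C

namespace IsBoundedMeasurable

variable {f : X → ℝ} {R : X → Y → ℝ}

protected lemma comp (hf : IsBoundedMeasurable f) {φ : Y → X} (hφ : Measurable φ) :
    IsBoundedMeasurable fun y => f (φ y) :=
  ⟨hf.measurable.comp hφ, hf.exists_bound.imp fun _ hC y => hC (φ y)⟩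

protected lemma add (hf : IsBoundedMeasurable f) {g : X → ℝ} (hg : IsBoundedMeasurable g) :
    IsBoundedMeasurable fun x => f x + g x := by
  obtain ⟨C, hC⟩ := hf.exists_bound
  obtain ⟨D, hD⟩ := hg.exists_bound
  exact ⟨hf.measurable.add hg.measurable, C + D, fun x =>
    (abs_add_le _ _).trans (add_le_add (hC x) (hD x))⟩

protected lemma const_mul (hf : IsBoundedMeasurable f) (c : ℝ) :
    IsBoundedMeasurable fun x => c * f x := by
  obtain ⟨C, hC⟩ := hf.exists_bound
  refine ⟨hf.measurable.const_mul c, |c| * C, fun x => ?_⟩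
  rw [abs_mul]
  gcongr
  exact hC x

protected lemma neg (hf : IsBoundedMeasurable f) : IsBoundedMeasurable fun x => -f x := by
  simpa using hf.const_mul (-1)

protected lemma exp (hf : IsBoundedMeasurable f) : IsBoundedMeasurable fun x => Real.exp (f x) := by
  obtain ⟨C, hC⟩ := hf.exists_bound
  refine ⟨hf.measurable.exp, Real.exp C, fun x => ?_⟩
  rw [Real.abs_exp]
  exact Real.exp_le_exp.2 (abs_le.1 (hC x)).2

lemma integrable [IsFiniteMeasure μ] (hf : IsBoundedMeasurable f) : Integrable f μ :=
  let ⟨C, hC⟩ := hf.exists_bound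
  Integrable.of_bound hf.measurable.aestronglyMeasurable C (Eventually.of_forall hC)

protected lemma swap (hR : IsBoundedMeasurable (Function.uncurry R)) :
    IsBoundedMeasurable (Function.uncurry fun y x => R x y) :=
  hR.comp measurable_swap

lemma of_uncurry_left (hR : IsBoundedMeasurable (Function.uncurry R)) (x : X) :
    IsBoundedMeasurable (R x) :=
  hR.comp measurable_prodMk_left

lemma of_uncurry_right (hR : IsBoundedMeasurable (Function.uncurry R)) (y : Y) :
    IsBoundedMeasurable fun x => R x y :=
  hR.comp measurable_prodMk_right

protected lemma integral [IsProbabilityMeasure ν] (hR : IsBoundedMeasurable (Function.uncurry R)) :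
    IsBoundedMeasurable fun x => ∫ y, R x y ∂ν := by
  obtain ⟨C, hC⟩ := hR.exists_bound
  refine ⟨hR.measurable.stronglyMeasurable.integral_prod_right.measurable, C, fun x => ?_⟩
  simpa using norm_integral_le_of_norm_le_const (μ := ν) (f := R x)
    (Eventually.of_forall fun y => hC (x, y))

lemma ae_essInf_le (hf : IsBoundedMeasurable f) : ∀ᵐ x ∂μ, essInf f μ ≤ f x :=
  let ⟨C, hC⟩ := hf.exists_bound
  _root_.ae_essInf_le (isBoundedUnder_of ⟨-C, fun x => (abs_le.1 (hC x)).1⟩)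

lemma le_essInf [NeZero μ] (hf : IsBoundedMeasurable f) {a : ℝ} (ha : ∀ᵐ x ∂μ, a ≤ f x) :
    a ≤ essInf f μ := by
  obtain ⟨C, hC⟩ := hf.exists_bound
  have hbdd : IsBoundedUnder (· ≤ ·) (ae μ) f :=
    isBoundedUnder_of ⟨C, fun x => (abs_le.1 (hC x)).2⟩
  exact le_liminf_of_le hbdd.isCoboundedUnder_ge ha

lemma abs_essInf_le [NeZero μ] (hf : IsBoundedMeasurable f) {C : ℝ} (hC : ∀ x, |f x| ≤ C) :
    |essInf f μ| ≤ C := by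
  obtain ⟨x, hx⟩ := (hf.ae_essInf_le (μ := μ)).exists
  exact abs_le.2 ⟨hf.le_essInf (Eventually.of_forall fun x => (abs_le.1 (hC x)).1),
    hx.trans (abs_le.1 (hC x)).2⟩

lemma lt_essInf_iff [NeZero μ] (hf : IsBoundedMeasurable f) {c : ℝ} :
    c < essInf f μ ↔ ∃ q : ℚ, c < q ∧ ∀ᵐ x ∂μ, (q : ℝ) ≤ f x := by
  constructor
  · intro hc
    obtain ⟨q, hcq, hq⟩ := exists_rat_btwn hc
    exact ⟨q, hcq, hf.ae_essInf_le.mono fun x hx => hq.le.trans hx⟩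
  · rintro ⟨q, hcq, hq⟩
    exact hcq.trans_le (hf.le_essInf hq)

protected lemma essInf [NeZero ν] [SFinite ν] (hR : IsBoundedMeasurable (Function.uncurry R)) :
    IsBoundedMeasurable fun x => essInf (R x) ν := by
  obtain ⟨C, hC⟩ := hR.exists_bound
  refine ⟨measurable_of_Ioi fun c => ?_, C, fun x =>
    (hR.of_uncurry_left x).abs_essInf_le fun y => hC (x, y)⟩
  have hpre : (fun x => essInf (R x) ν) ⁻¹' Set.Ioi c =
      ⋃ q : ℚ, {x | c < q ∧ ν (Prod.mk x ⁻¹' {p | Function.uncurry R p < q}) = 0} := by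
    ext x
    simp [(hR.of_uncurry_left x).lt_essInf_iff, ae_iff]
  rw [hpre]
  exact MeasurableSet.iUnion fun q => (MeasurableSet.const _).inter <|
    measurable_measure_prodMk_left (measurableSet_lt hR.measurable measurable_const)
      (measurableSet_singleton 0)

lemma ae_ae_essInf_le [NeZero μ] [SFinite μ] [SFinite ν]
    (hR : IsBoundedMeasurable (Function.uncurry R)) :
    ∀ᵐ x ∂μ, ∀ᵐ y ∂ν, essInf (fun x' => R x' y) μ ≤ R x y := by
  rw [Measure.ae_ae_comm]
  · exact Eventually.of_forall fun y => (hR.of_uncurry_right y).ae_essInf_le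
  · exact measurableSet_le (hR.swap.essInf.measurable.comp measurable_snd) hR.measurable

end IsBoundedMeasurable

end BoundedMeasurable

section WeakInfConv

variable {X Y Θ : Type*} [MeasurableSpace X] [MeasurableSpace Y] [MeasurableSpace Θ]

/-- The weak infimum-convolution of `b` on one factor: the infimum over `t ∈ [0, 1]` of
`(1 - t) * b x + t * m + t ^ 2 / 2`, with `m` the essential infimum of `b`. Equivalently, the
infimum of `∫ b dp + t ^ 2 / 2` over the mixtures `p` of the Dirac mass at `x`, with weight `1 - t`,
and a probability measure absolutely continuous with respect to `μ`, with weight `t`. -/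
noncomputable def weakInfConv (μ : Measure X) (b : X → ℝ) (x : X) : ℝ :=
  essInf b μ + minMix (b x - essInf b μ)

variable {μ : Measure X} {ν : Measure Y} {b : X → ℝ} {R : X → Y → ℝ}

lemma weakInfConv_le_of_essInf_le {c : ℝ} (hc : essInf b μ ≤ c) (x : X) {t : ℝ}
    (ht : t ∈ Set.Icc (0 : ℝ) 1) : weakInfConv μ b x ≤ (1 - t) * b x + t * c + t ^ 2 / 2 := by
  have hmin := minMix_le (b x - essInf b μ) ht
  have hmul := mul_le_mul_of_nonneg_left hc ht.1
  unfold weakInfConv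
  linarith

lemma sub_sq_div_two_le_weakInfConv {a r : ℝ} {x : X} (hx : a ≤ b x)
    (hm : a - r ≤ essInf b μ) : a - r ^ 2 / 2 ≤ weakInfConv μ b x := by
  have := sub_sq_div_two_le_minMix (sub_le_sub_right hx (essInf b μ)) (sub_le_comm.1 hm)
  unfold weakInfConv
  linarith

lemma IsBoundedMeasurable.le_weakInfConv [NeZero μ] (hb : IsBoundedMeasurable b) {a : ℝ} {x : X}
    (h : ∀ t ∈ Set.Icc (0 : ℝ) 1, ∀ᵐ x' ∂μ, a ≤ (1 - t) * b x + t * b x' + t ^ 2 / 2) :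
    a ≤ weakInfConv μ b x := by
  obtain ⟨t, ht, hmin⟩ := exists_minMix_eq (b x - essInf b μ)
  have hconv : weakInfConv μ b x = (1 - t) * b x + t * essInf b μ + t ^ 2 / 2 := by
    rw [weakInfConv, hmin]
    ring
  rw [hconv]
  rcases ht.1.eq_or_lt with rfl | htpos
  · obtain ⟨x', hx'⟩ := (h 0 ht).exists
    simpa using hx'
  · have hle : (a - (1 - t) * b x - t ^ 2 / 2) / t ≤ essInf b μ := by
      refine hb.le_essInf ((h t ht).mono fun x' hx' => ?_)
      rw [div_le_iff₀ htpos]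
      linarith
    rw [div_le_iff₀ htpos] at hle
    linarith

lemma IsBoundedMeasurable.abs_weakInfConv_le [NeZero μ] (hb : IsBoundedMeasurable b) {C : ℝ}
    (hC : ∀ x, |b x| ≤ C) (x : X) : |weakInfConv μ b x| ≤ C := by
  have hm := abs_le.1 (hb.abs_essInf_le (μ := μ) hC)
  have hx := abs_le.1 (hC x)
  refine abs_le.2 ⟨?_, ?_⟩
  · simpa using sub_sq_div_two_le_weakInfConv (r := 0) hx.1 (by simpa using hm.1)
  · have := weakInfConv_le_of_essInf_le hm.2 x (t := 0) ⟨le_rfl, zero_le_one⟩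
    linarith

lemma IsBoundedMeasurable.weakInfConv_uncurry [NeZero μ] [SFinite μ] {R : Θ → X → ℝ}
    (hR : IsBoundedMeasurable (Function.uncurry R)) :
    IsBoundedMeasurable (Function.uncurry fun θ => weakInfConv μ (R θ)) := by
  have hm : Measurable fun p : Θ × X => essInf (R p.1) μ :=
    hR.essInf.measurable.comp measurable_fst
  obtain ⟨C, hC⟩ := hR.exists_bound
  exact ⟨hm.add (measurable_minMix.comp (hR.measurable.sub hm)), C, fun p =>
    (hR.of_uncurry_left p.1).abs_weakInfConv_le (fun x => hC (p.1, x)) p.2⟩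

protected lemma IsBoundedMeasurable.weakInfConv [NeZero μ] [SFinite μ]
    (hb : IsBoundedMeasurable b) :
    IsBoundedMeasurable (weakInfConv μ b) :=
  IsBoundedMeasurable.weakInfConv_uncurry (R := fun _ : Unit => b) (hb.comp measurable_snd)
    |>.of_uncurry_left ()

lemma integral_le_exp_integral [IsProbabilityMeasure μ] {E u : X → ℝ} {m : ℝ}
    (hE : Integrable E μ) (hu : Integrable u μ)
    (h : ∀ᵐ x ∂μ, E x ≤ Real.exp m * (u x - m + 1)) :
    ∫ x, E x ∂μ ≤ Real.exp (∫ x, u x ∂μ) := by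
  have hum : Integrable (fun x => u x - m) μ := hu.sub (integrable_const m)
  calc ∫ x, E x ∂μ ≤ ∫ x, Real.exp m * (u x - m + 1) ∂μ :=
        integral_mono_ae hE ((hum.add (integrable_const 1)).const_mul _) h
    _ = Real.exp m * (∫ x, u x ∂μ - m + 1) := by
        rw [integral_const_mul, integral_add hum (integrable_const 1),
          integral_sub hu (integrable_const m)]
        simp
    _ ≤ Real.exp m * Real.exp (∫ x, u x ∂μ - m) := by
        gcongr
        exact Real.add_one_le_exp _
    _ = Real.exp (∫ x, u x ∂μ) := by rw [← Real.exp_add, add_sub_cancel]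

lemma integral_exp_weakInfConv_le [IsProbabilityMeasure μ] (hb : IsBoundedMeasurable b) :
    ∫ x, Real.exp (weakInfConv μ b x) ∂μ ≤ Real.exp (∫ x, b x ∂μ) := by
  refine integral_le_exp_integral (m := essInf b μ) hb.weakInfConv.exp.integrable hb.integrable ?_
  filter_upwards [hb.ae_essInf_le] with x hx
  rw [weakInfConv, Real.exp_add, add_comm _ (1 : ℝ)]
  gcongr
  exact exp_minMix_le_one_add (sub_nonneg.2 hx)

lemma integral_exp_neg_le_exp_neg_integral_weakInfConv [IsProbabilityMeasure μ]
    (hb : IsBoundedMeasurable b) :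
    ∫ x, Real.exp (-b x) ∂μ ≤ Real.exp (-∫ x, weakInfConv μ b x ∂μ) := by
  rw [← integral_neg]
  refine integral_le_exp_integral (m := -essInf b μ) hb.neg.exp.integrable
    hb.weakInfConv.neg.integrable ?_
  filter_upwards [hb.ae_essInf_le] with x hx
  calc Real.exp (-b x) = Real.exp (-essInf b μ) * Real.exp (-(b x - essInf b μ)) := by
        rw [← Real.exp_add]
        congr 1
        ring
    _ ≤ Real.exp (-essInf b μ) * (1 - minMix (b x - essInf b μ)) := by
        gcongr
        exact exp_neg_le_one_sub_minMix (sub_nonneg.2 hx)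
    _ = Real.exp (-essInf b μ) * (-weakInfConv μ b x - -essInf b μ + 1) := by
        rw [weakInfConv]
        ring

lemma integral_exp_mix_le_one {U V : Y → ℝ} (hU : Integrable (fun y => Real.exp (U y)) ν)
    (hV : Integrable (fun y => Real.exp (V y)) ν) (hU₁ : ∫ y, Real.exp (U y) ∂ν ≤ 1)
    (hV₁ : ∫ y, Real.exp (V y) ∂ν ≤ 1) {t : ℝ} (ht : t ∈ Set.Icc (0 : ℝ) 1) :
    ∫ y, Real.exp ((1 - t) * U y + t * V y) ∂ν ≤ 1 := by
  have ht₁ : 0 ≤ 1 - t := sub_nonneg.2 ht.2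
  have hconvex (y : Y) : Real.exp ((1 - t) * U y + t * V y) ≤
      (1 - t) * Real.exp (U y) + t * Real.exp (V y) :=
    convexOn_exp.2 (Set.mem_univ (U y)) (Set.mem_univ (V y)) ht₁ ht.1 (sub_add_cancel 1 t)
  calc ∫ y, Real.exp ((1 - t) * U y + t * V y) ∂ν
      ≤ ∫ y, ((1 - t) * Real.exp (U y) + t * Real.exp (V y)) ∂ν :=
        integral_mono_of_nonneg (Eventually.of_forall fun y => (Real.exp_pos _).le)
          ((hU.const_mul _).add (hV.const_mul _)) (Eventually.of_forall hconvex)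
    _ = (1 - t) * ∫ y, Real.exp (U y) ∂ν + t * ∫ y, Real.exp (V y) ∂ν := by
        rw [integral_add (hU.const_mul _) (hV.const_mul _), integral_const_mul,
          integral_const_mul]
    _ ≤ (1 - t) * 1 + t * 1 := by
        gcongr
        exact ht.1
    _ = 1 := by ring

lemma integral_exp_mix_le {U V : Y → ℝ} (hU : Integrable (fun y => Real.exp (U y)) ν)
    (hV : Integrable (fun y => Real.exp (V y)) ν) {a c t : ℝ} (ht : t ∈ Set.Icc (0 : ℝ) 1)
    (ha : ∫ y, Real.exp (U y) ∂ν ≤ Real.exp a) (hc : ∫ y, Real.exp (V y) ∂ν ≤ Real.exp c) :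
    ∫ y, Real.exp ((1 - t) * U y + t * V y) ∂ν ≤ Real.exp ((1 - t) * a + t * c) := by
  have hnorm := integral_exp_mix_le_one (U := fun y => U y - a) (V := fun y => V y - c)
    (by simpa only [Real.exp_sub] using hU.div_const _)
    (by simpa only [Real.exp_sub] using hV.div_const _)
    (by simpa only [Real.exp_sub, integral_div] using div_le_one_of_le₀ ha (Real.exp_pos a).le)
    (by simpa only [Real.exp_sub, integral_div] using div_le_one_of_le₀ hc (Real.exp_pos c).le) ht
  have hshift (y : Y) : Real.exp ((1 - t) * (U y - a) + t * (V y - c)) =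
      Real.exp ((1 - t) * U y + t * V y) / Real.exp ((1 - t) * a + t * c) := by
    rw [← Real.exp_sub]
    congr 1
    ring
  simpa only [hshift, integral_div, div_le_one (Real.exp_pos _)] using hnorm

lemma integral_weakInfConv_le [IsProbabilityMeasure μ] [IsProbabilityMeasure ν]
    (hR : IsBoundedMeasurable (Function.uncurry R)) (x : X) :
    ∫ y, weakInfConv μ (fun x' => R x' y) x ∂ν ≤ weakInfConv μ (fun x' => ∫ y, R x' y ∂ν) x := by
  have hconv : IsBoundedMeasurable fun y => weakInfConv μ (fun x' => R x' y) x :=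
    hR.swap.weakInfConv_uncurry.of_uncurry_right x
  refine hR.integral.le_weakInfConv fun t ht => ?_
  filter_upwards [hR.ae_ae_essInf_le (ν := ν)] with x' hx'
  have hRx := (hR.of_uncurry_left x).const_mul (1 - t) |>.integrable (μ := ν)
  have hRx' := (hR.of_uncurry_left x').const_mul t |>.integrable (μ := ν)
  have hmix : Integrable (fun y => (1 - t) * R x y + t * R x' y) ν := hRx.add hRx'
  calc ∫ y, weakInfConv μ (fun x' => R x' y) x ∂ν
      ≤ ∫ y, ((1 - t) * R x y + t * R x' y + t ^ 2 / 2) ∂ν :=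
        integral_mono_ae hconv.integrable (hmix.add (integrable_const _))
          (hx'.mono fun y hy => weakInfConv_le_of_essInf_le hy x ht)
    _ = (1 - t) * ∫ y, R x y ∂ν + t * ∫ y, R x' y ∂ν + t ^ 2 / 2 := by
        rw [integral_add hmix (integrable_const _), integral_add hRx hRx']
        simp [integral_const_mul]

lemma integral_exp_weakInfConv_le_exp_weakInfConv [IsProbabilityMeasure μ]
    [IsProbabilityMeasure ν] (hR : IsBoundedMeasurable (Function.uncurry R))
    (hb : IsBoundedMeasurable b) (hRb : ∀ x, ∫ y, Real.exp (R x y) ∂ν ≤ Real.exp (b x)) (x : X) :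
    ∫ y, Real.exp (weakInfConv μ (fun x' => R x' y) x) ∂ν ≤ Real.exp (weakInfConv μ b x) := by
  have hconv : IsBoundedMeasurable fun y => weakInfConv μ (fun x' => R x' y) x :=
    hR.swap.weakInfConv_uncurry.of_uncurry_right x
  rw [← Real.log_le_iff_le_exp (integral_exp_pos hconv.exp.integrable)]
  refine hb.le_weakInfConv fun t ht => ?_
  filter_upwards [hR.ae_ae_essInf_le (ν := ν)] with x' hx'
  rw [Real.log_le_iff_le_exp (integral_exp_pos hconv.exp.integrable)]
  have hmix : IsBoundedMeasurable fun y => (1 - t) * R x y + t * R x' y :=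
    ((hR.of_uncurry_left x).const_mul _).add ((hR.of_uncurry_left x').const_mul _)
  calc ∫ y, Real.exp (weakInfConv μ (fun x' => R x' y) x) ∂ν
      ≤ ∫ y, Real.exp ((1 - t) * R x y + t * R x' y) * Real.exp (t ^ 2 / 2) ∂ν := by
        refine integral_mono_ae hconv.exp.integrable (hmix.exp.integrable.mul_const _)
          (hx'.mono fun y hy => ?_)
        exact (Real.exp_le_exp.2 (weakInfConv_le_of_essInf_le hy x ht)).trans_eq (Real.exp_add _ _)
    _ ≤ Real.exp ((1 - t) * b x + t * b x') * Real.exp (t ^ 2 / 2) := by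
        rw [integral_mul_const]
        gcongr
        exact integral_exp_mix_le (hR.of_uncurry_left x).exp.integrable
          (hR.of_uncurry_left x').exp.integrable ht (hRb x) (hRb x')
    _ = Real.exp ((1 - t) * b x + t * b x' + t ^ 2 / 2) := (Real.exp_add _ _).symm

end WeakInfConv

section Product

variable {n : ℕ}

/-- The weak infimum-convolution on a finite product, applying `weakInfConv` to one coordinate after
another. It is bounded below by the infimum over probability measures `p` of
`∫ F dp + (∑ᵢ p {y | yᵢ ≠ xᵢ} ^ 2) / 2`. -/
noncomputable def piWeakInfConv : {n : ℕ} → {X : Fin n → Type u} → [∀ i, MeasurableSpace (X i)] →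
    (∀ i, Measure (X i)) → ((∀ i, X i) → ℝ) → (∀ i, X i) → ℝ
  | 0, _, _, _, F, x => F x
  | _ + 1, _, _, μ, F, x =>
    weakInfConv (μ 0)
      (fun x₀ => piWeakInfConv (fun i => μ i.succ) (fun y => F (Fin.cons x₀ y)) (Fin.tail x)) (x 0)

section Succ

variable {X : Fin (n + 1) → Type u} [∀ i, MeasurableSpace (X i)]

lemma piWeakInfConv_cons (μ : ∀ i, Measure (X i)) (F : (∀ i, X i) → ℝ) (x₀ : X 0)
    (y : ∀ i : Fin n, X i.succ) :
    piWeakInfConv μ F (Fin.cons x₀ y) = weakInfConv (μ 0)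
      (fun x₀' => piWeakInfConv (fun i => μ i.succ) (fun y => F (Fin.cons x₀' y)) y) x₀ := by
  simp [piWeakInfConv]

lemma measurable_finCons :
    Measurable fun p : X 0 × (∀ i : Fin n, X i.succ) => (Fin.cons p.1 p.2 : ∀ i, X i) :=
  measurable_pi_lambda _ <| Fin.cases measurable_fst fun i =>
    (measurable_pi_apply i).comp measurable_snd

lemma measurable_finTail : Measurable (Fin.tail : (∀ i, X i) → ∀ i : Fin n, X i.succ) :=
  measurable_pi_lambda _ fun i => measurable_pi_apply i.succ

lemma IsBoundedMeasurable.curry_cons {F : (∀ i, X i) → ℝ} (hF : IsBoundedMeasurable F) :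
    IsBoundedMeasurable (Function.uncurry fun x₀ (y : ∀ i : Fin n, X i.succ) =>
      F (Fin.cons x₀ y)) :=
  hF.comp measurable_finCons

lemma IsBoundedMeasurable.integral_pi_succ {μ : ∀ i, Measure (X i)}
    [∀ i, IsProbabilityMeasure (μ i)] {F : (∀ i, X i) → ℝ} (hF : IsBoundedMeasurable F) :
    ∫ x, F x ∂Measure.pi μ =
      ∫ x₀, ∫ y, F (Fin.cons x₀ y) ∂Measure.pi (fun i : Fin n => μ i.succ) ∂μ 0 := by
  calc ∫ x, F x ∂Measure.pi μ
      = ∫ p, F (Fin.cons p.1 p.2) ∂(μ 0).prod (Measure.pi fun i : Fin n => μ i.succ) := by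
        rw [← (measurePreserving_piFinSuccAbove μ 0).symm.integral_comp']
        simp only [MeasurableEquiv.piFinSuccAbove_symm_apply, Fin.insertNthEquiv_zero]
        rfl
    _ = _ := integral_prod _ hF.curry_cons.integrable

end Succ

variable {X : Fin n → Type u} [∀ i, MeasurableSpace (X i)] {μ : ∀ i, Measure (X i)}
  [∀ i, IsProbabilityMeasure (μ i)]

lemma IsBoundedMeasurable.piWeakInfConv_uncurry {Θ : Type u} [MeasurableSpace Θ]
    {F : Θ → (∀ i, X i) → ℝ} (hF : IsBoundedMeasurable (Function.uncurry F)) :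
    IsBoundedMeasurable (Function.uncurry fun θ => piWeakInfConv μ (F θ)) := by
  induction n generalizing Θ with
  | zero => exact hF
  | succ n ih =>
    let slice (p : Θ × X 0) (y : ∀ i : Fin n, X i.succ) : ℝ := F p.1 (Fin.cons p.2 y)
    have hslice : IsBoundedMeasurable (Function.uncurry slice) :=
      hF.comp (φ := fun q : (Θ × X 0) × (∀ i : Fin n, X i.succ) => (q.1.1, Fin.cons q.1.2 q.2))
        (by have := measurable_finCons (X := X); fun_prop)
    have hconv := ih (μ := fun i => μ i.succ) hslice
    have hhead := (hconv.comp (φ := fun q : (Θ × (∀ i : Fin n, X i.succ)) × X 0 =>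
      ((q.1.1, q.2), q.1.2)) (by fun_prop)).weakInfConv_uncurry (μ := μ 0)
        (R := fun (r : Θ × (∀ i : Fin n, X i.succ)) x₀ =>
          piWeakInfConv (fun i => μ i.succ) (slice (r.1, x₀)) r.2)
    exact hhead.comp (φ := fun q : Θ × (∀ i, X i) => ((q.1, Fin.tail q.2), q.2 0))
      (by have := measurable_finTail (X := X); fun_prop)

protected lemma IsBoundedMeasurable.piWeakInfConv {F : (∀ i, X i) → ℝ}
    (hF : IsBoundedMeasurable F) : IsBoundedMeasurable (piWeakInfConv μ F) :=
  IsBoundedMeasurable.piWeakInfConv_uncurry (F := fun _ : PUnit => F) (hF.comp measurable_snd)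
    |>.of_uncurry_left PUnit.unit

lemma integral_exp_piWeakInfConv_le {F : (∀ i, X i) → ℝ} (hF : IsBoundedMeasurable F) :
    ∫ x, Real.exp (piWeakInfConv μ F x) ∂Measure.pi μ ≤
      Real.exp (∫ x, F x ∂Measure.pi μ) := by
  induction n with
  | zero => simp [piWeakInfConv, integral_unique]
  | succ n ih =>
    set ν := Measure.pi fun i : Fin n => μ i.succ
    let b (x₀ : X 0) : ℝ := ∫ y, F (Fin.cons x₀ y) ∂ν
    have hb : IsBoundedMeasurable b := hF.curry_cons.integral
    have hR := hF.curry_cons.piWeakInfConv_uncurry (μ := fun i => μ i.succ)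
    calc ∫ x, Real.exp (piWeakInfConv μ F x) ∂Measure.pi μ
        = ∫ x₀, ∫ y, Real.exp (piWeakInfConv μ F (Fin.cons x₀ y)) ∂ν ∂μ 0 :=
          hF.piWeakInfConv.exp.integral_pi_succ
      _ ≤ ∫ x₀, Real.exp (weakInfConv (μ 0) b x₀) ∂μ 0 := by
          refine integral_mono hF.piWeakInfConv.exp.curry_cons.integral.integrable
            hb.weakInfConv.exp.integrable fun x₀ => ?_
          simp only [piWeakInfConv_cons]
          exact integral_exp_weakInfConv_le_exp_weakInfConv hR hb
            (fun x₀' => ih (hF.curry_cons.of_uncurry_left x₀')) x₀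
      _ ≤ Real.exp (∫ x₀, b x₀ ∂μ 0) := integral_exp_weakInfConv_le hb
      _ = Real.exp (∫ x, F x ∂Measure.pi μ) := by rw [hF.integral_pi_succ]

lemma integral_exp_neg_le_exp_neg_integral_piWeakInfConv {F : (∀ i, X i) → ℝ}
    (hF : IsBoundedMeasurable F) :
    ∫ x, Real.exp (-F x) ∂Measure.pi μ ≤
      Real.exp (-∫ x, piWeakInfConv μ F x ∂Measure.pi μ) := by
  induction n with
  | zero => simp [piWeakInfConv, integral_unique]
  | succ n ih =>
    set ν := Measure.pi fun i : Fin n => μ i.succ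
    let R (x₀ : X 0) : (∀ i : Fin n, X i.succ) → ℝ :=
      piWeakInfConv (fun i => μ i.succ) fun y => F (Fin.cons x₀ y)
    have hR : IsBoundedMeasurable (Function.uncurry R) := hF.curry_cons.piWeakInfConv_uncurry
    have hb : IsBoundedMeasurable fun x₀ => ∫ y, R x₀ y ∂ν := hR.integral
    calc ∫ x, Real.exp (-F x) ∂Measure.pi μ
        = ∫ x₀, ∫ y, Real.exp (-F (Fin.cons x₀ y)) ∂ν ∂μ 0 := hF.neg.exp.integral_pi_succ
      _ ≤ ∫ x₀, Real.exp (-∫ y, R x₀ y ∂ν) ∂μ 0 :=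
          integral_mono hF.neg.exp.curry_cons.integral.integrable hb.neg.exp.integrable
            fun x₀ => ih (hF.curry_cons.of_uncurry_left x₀)
      _ ≤ Real.exp (-∫ x₀, weakInfConv (μ 0) (fun x₀' => ∫ y, R x₀' y ∂ν) x₀ ∂μ 0) :=
          integral_exp_neg_le_exp_neg_integral_weakInfConv hb
      _ ≤ Real.exp (-∫ x₀, ∫ y, piWeakInfConv μ F (Fin.cons x₀ y) ∂ν ∂μ 0) := by
          refine Real.exp_le_exp.2 (neg_le_neg (integral_mono
            hF.piWeakInfConv.curry_cons.integral.integrable hb.weakInfConv.integrable fun x₀ => ?_))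
          simp only [piWeakInfConv_cons]
          exact integral_weakInfConv_le hR x₀
      _ = Real.exp (-∫ x, piWeakInfConv μ F x ∂Measure.pi μ) := by
          rw [hF.piWeakInfConv.integral_pi_succ]

lemma sub_sum_sq_div_two_le_piWeakInfConv {F : (∀ i, X i) → ℝ} (hF : IsBoundedMeasurable F)
    {x : ∀ i, X i} {a : ℝ} {g : Fin n → ℝ}
    (h : ∀ y, a - (∑ i, if x i ≠ y i then g i else 0) ≤ F y) :
    a - (∑ i, g i ^ 2) / 2 ≤ piWeakInfConv μ F x := by
  induction n generalizing a with
  | zero => simpa [piWeakInfConv] using h x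
  | succ n ih =>
    obtain ⟨x₀, x, rfl⟩ : ∃ x₀ y, x = Fin.cons x₀ y :=
      ⟨x 0, Fin.tail x, (Fin.cons_self_tail x).symm⟩
    have hslice (x₀' : X 0) {c : ℝ} (hc : c ≤ a - if x₀ ≠ x₀' then g 0 else 0) :
        c - (∑ i : Fin n, g i.succ ^ 2) / 2 ≤
          piWeakInfConv (fun i => μ i.succ) (fun y => F (Fin.cons x₀' y)) x := by
      refine ih (hF.curry_cons.of_uncurry_left x₀') fun y => ?_
      have hy := h (Fin.cons x₀' y)
      simp only [Fin.sum_univ_succ, Fin.cons_zero, Fin.cons_succ] at hy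
      linarith
    have hR := (hF.curry_cons.piWeakInfConv_uncurry (μ := fun i => μ i.succ)).of_uncurry_right x
    have hhead : a - (∑ i : Fin n, g i.succ ^ 2) / 2 - |g 0| ≤ essInf (fun x₀' =>
        piWeakInfConv (fun i => μ i.succ) (fun y => F (Fin.cons x₀' y)) x) (μ 0) := by
      refine hR.le_essInf (Eventually.of_forall fun x₀' => ?_)
      rw [sub_right_comm]
      refine hslice x₀' (sub_le_sub_left ?_ a)
      split_ifs <;> simp [le_abs_self]
    have hconv := sub_sq_div_two_le_weakInfConv
      (b := fun x₀' => piWeakInfConv (fun i => μ i.succ) (fun y => F (Fin.cons x₀' y)) x)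
      (hslice x₀ (c := a) (by simp)) hhead
    rw [sq_abs] at hconv
    rw [piWeakInfConv_cons, Fin.sum_univ_succ]
    linarith

end Product

section Concentration

/-- Talagrand's stability condition: changing coordinates decreases `f` from its value at `x` by at
most the sum of the corresponding certificates `g i x`, whose squares sum to at most `c`. -/
structure IsStable {ι : Type*} [Fintype ι] {X : ι → Type*} (f : (∀ i, X i) → ℝ)
    (g : ι → (∀ i, X i) → ℝ) (c : ℝ) : Prop where
  sub_le : ∀ x y, f x - f y ≤ ∑ i, if x i ≠ y i then g i x else 0
  sum_sq_le : ∀ x, ∑ i, g i x ^ 2 ≤ c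

namespace IsStable

section Fintype

variable {ι : Type*} [Fintype ι] {X : ι → Type*} {f : (∀ i, X i) → ℝ} {g : ι → (∀ i, X i) → ℝ}
  {c : ℝ}

lemma const_mul (h : IsStable f g c) {t : ℝ} (ht : 0 ≤ t) :
    IsStable (fun x => t * f x) (fun i x => t * g i x) (t ^ 2 * c) where
  sub_le x y :=
    calc t * f x - t * f y = t * (f x - f y) := (mul_sub _ _ _).symm
      _ ≤ t * ∑ i, if x i ≠ y i then g i x else 0 := by
          gcongr
          exact h.sub_le x y
      _ = ∑ i, if x i ≠ y i then t * g i x else 0 := by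
          simp only [Finset.mul_sum, mul_ite, mul_zero]
  sum_sq_le x := by
    simp only [mul_pow, ← Finset.mul_sum]
    gcongr
    exact h.sum_sq_le x

lemma sub_le_half (h : IsStable f g c) (x y : ∀ i, X i) : f x - f y ≤ (Fintype.card ι + c) / 2 :=
  calc f x - f y ≤ ∑ i, if x i ≠ y i then g i x else 0 := h.sub_le x y
    _ ≤ ∑ i, (1 + g i x ^ 2) / 2 := by
        gcongr with i
        split_ifs
        · linarith [sq_nonneg (g i x - 1)]
        · positivity
    _ = (Fintype.card ι + ∑ i, g i x ^ 2) / 2 := by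
        simp [← Finset.sum_div, Finset.sum_add_distrib]
    _ ≤ (Fintype.card ι + c) / 2 := by linarith [h.sum_sq_le x]

lemma isBoundedMeasurable [∀ i, MeasurableSpace (X i)] (h : IsStable f g c) (hf : Measurable f) :
    IsBoundedMeasurable f := by
  refine ⟨hf, ?_⟩
  rcases isEmpty_or_nonempty (∀ i, X i) with _ | ⟨⟨y⟩⟩
  · exact ⟨0, isEmptyElim⟩
  · refine ⟨|f y| + (Fintype.card ι + c) / 2, fun x => ?_⟩
    have hxy : |f x - f y| ≤ (Fintype.card ι + c) / 2 :=
      abs_sub_le_iff.2 ⟨h.sub_le_half x y, h.sub_le_half y x⟩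
    linarith [abs_sub_abs_le_abs_sub (f x) (f y)]

end Fintype

section Fin

variable {n : ℕ} {X : Fin n → Type u} [∀ i, MeasurableSpace (X i)] {μ : ∀ i, Measure (X i)}
  [∀ i, IsProbabilityMeasure (μ i)] {f : (∀ i, X i) → ℝ} {g : Fin n → (∀ i, X i) → ℝ} {c : ℝ}

lemma sub_half_le_piWeakInfConv (h : IsStable f g c) (hf : IsBoundedMeasurable f)
    (x : ∀ i, X i) :
    f x - c / 2 ≤ piWeakInfConv μ f x :=
  calc f x - c / 2 ≤ f x - (∑ i, g i x ^ 2) / 2 := by linarith [h.sum_sq_le x]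
    _ ≤ piWeakInfConv μ f x := sub_sum_sq_div_two_le_piWeakInfConv hf
      fun y => sub_le_comm.1 (h.sub_le x y)

lemma integral_exp_le (h : IsStable f g c) (hf : IsBoundedMeasurable f) :
    ∫ x, Real.exp (f x) ∂Measure.pi μ ≤ Real.exp (∫ x, f x ∂Measure.pi μ + c / 2) := by
  calc ∫ x, Real.exp (f x) ∂Measure.pi μ
      ≤ ∫ x, Real.exp (piWeakInfConv μ f x) * Real.exp (c / 2) ∂Measure.pi μ := by
        refine integral_mono hf.exp.integrable (hf.piWeakInfConv.exp.integrable.mul_const _)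
          fun x => ?_
        simp only [← Real.exp_add, Real.exp_le_exp]
        linarith [h.sub_half_le_piWeakInfConv (μ := μ) hf x]
    _ ≤ Real.exp (∫ x, f x ∂Measure.pi μ) * Real.exp (c / 2) := by
        rw [integral_mul_const]
        gcongr
        exact integral_exp_piWeakInfConv_le hf
    _ = Real.exp (∫ x, f x ∂Measure.pi μ + c / 2) := (Real.exp_add _ _).symm

lemma integral_exp_neg_le (h : IsStable f g c) (hf : IsBoundedMeasurable f) :
    ∫ x, Real.exp (-f x) ∂Measure.pi μ ≤ Real.exp (-∫ x, f x ∂Measure.pi μ + c / 2) := by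
  have hmean : ∫ x, f x ∂Measure.pi μ - c / 2 ≤ ∫ x, piWeakInfConv μ f x ∂Measure.pi μ := by
    calc ∫ x, f x ∂Measure.pi μ - c / 2 = ∫ x, (f x - c / 2) ∂Measure.pi μ := by
          rw [integral_sub hf.integrable (integrable_const _)]
          simp
      _ ≤ ∫ x, piWeakInfConv μ f x ∂Measure.pi μ :=
          integral_mono (hf.integrable.sub (integrable_const _)) hf.piWeakInfConv.integrable
            (h.sub_half_le_piWeakInfConv hf)
  refine (integral_exp_neg_le_exp_neg_integral_piWeakInfConv hf).trans (Real.exp_le_exp.2 ?_)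
  linarith

lemma integral_exp_mul_le (h : IsStable f g c) (hf : IsBoundedMeasurable f) (t : ℝ) :
    ∫ x, Real.exp (t * f x) ∂Measure.pi μ ≤
      Real.exp (t * ∫ x, f x ∂Measure.pi μ + t ^ 2 * c / 2) := by
  rcases le_total 0 t with ht | ht
  · simpa only [integral_const_mul] using
      (h.const_mul ht).integral_exp_le (μ := μ) (hf.const_mul t)
  · simpa only [neg_mul, neg_neg, integral_neg, integral_const_mul, neg_sq] using
      (h.const_mul (neg_nonneg.2 ht)).integral_exp_neg_le (μ := μ) (hf.const_mul (-t))

lemma hasSubgaussianMGF_fin {c : ℝ≥0} (h : IsStable f g c) (hf : Measurable f) :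
    HasSubgaussianMGF (fun x => f x - ∫ y, f y ∂Measure.pi μ) c (Measure.pi μ) := by
  have hbdd := h.isBoundedMeasurable hf
  set m := ∫ y, f y ∂Measure.pi μ
  have hexp (t : ℝ) (x : ∀ i, X i) :
      Real.exp (t * (f x - m)) = Real.exp (t * f x) / Real.exp (t * m) := by
    rw [mul_sub, Real.exp_sub]
  refine ⟨fun t => ?_, fun t => ?_⟩
  · simp only [hexp]
    exact (hbdd.const_mul t).exp.integrable.div_const _
  · simp only [mgf, hexp, integral_div]
    rw [div_le_iff₀ (Real.exp_pos _), ← Real.exp_add, add_comm, mul_comm (c : ℝ)]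
    exact h.integral_exp_mul_le hbdd t

end Fin

lemma hasSubgaussianMGF {ι : Type*} [Fintype ι] {X : ι → Type*} [∀ i, MeasurableSpace (X i)]
    {μ : ∀ i, Measure (X i)} [∀ i, IsProbabilityMeasure (μ i)] {f : (∀ i, X i) → ℝ}
    {g : ι → (∀ i, X i) → ℝ} {c : ℝ≥0} (h : IsStable f g c) (hf : Measurable f) :
    HasSubgaussianMGF (fun x => f x - ∫ y, f y ∂Measure.pi μ) c (Measure.pi μ) := by
  let e := (Fintype.equivFin ι).symm
  let T := MeasurableEquiv.piCongrLeft X e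
  have hT : MeasurePreserving T (Measure.pi fun j => μ (e j)) (Measure.pi μ) :=
    measurePreserving_piCongrLeft μ e
  have hT_apply (x : ∀ j, X (e j)) (j) : T x (e j) = x j :=
    Equiv.piCongrLeft_apply_apply X e x j
  have hstable : IsStable (fun x => f (T x)) (fun j x => g (e j) (T x)) c :=
    ⟨fun x y => by simpa only [← e.sum_comp, hT_apply] using h.sub_le (T x) (T y),
      fun x => by simpa only [← e.sum_comp] using h.sum_sq_le (T x)⟩
  have hfin := hstable.hasSubgaussianMGF_fin (μ := fun j => μ (e j)) (hf.comp T.measurable)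
  rw [hT.integral_comp' f, ← hT.symm.map_eq] at hfin
  simpa [Function.comp_def] using HasSubgaussianMGF.of_map T.symm.measurable.aemeasurable hfin

end IsStable

lemma measure_lt_abs_le_of_hasSubgaussianMGF {Ω : Type*} [MeasurableSpace Ω] {μ : Measure Ω}
    [IsFiniteMeasure μ] {Y : Ω → ℝ} {c : ℝ≥0} (hY : HasSubgaussianMGF Y c μ) {ε : ℝ} (hε : 0 ≤ ε) :
    μ {ω | ε < |Y ω|} ≤ ENNReal.ofReal (2 * Real.exp (-ε ^ 2 / (2 * c))) := by
  have hsub : {ω | ε < |Y ω|} ⊆ {ω | ε ≤ Y ω} ∪ {ω | ε ≤ (-Y) ω} :=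
    fun ω (hω : ε < |Y ω|) => (lt_abs.1 hω).imp le_of_lt fun h => h.le
  refine ENNReal.le_ofReal_iff_toReal_le (measure_ne_top _ _) (by positivity) |>.2 ?_
  calc μ.real {ω | ε < |Y ω|} ≤ μ.real {ω | ε ≤ Y ω} + μ.real {ω | ε ≤ (-Y) ω} :=
        (measureReal_mono hsub).trans (measureReal_union_le _ _)
    _ ≤ Real.exp (-ε ^ 2 / (2 * c)) + Real.exp (-ε ^ 2 / (2 * c)) :=
        add_le_add (hY.measure_ge_le hε) (hY.neg.measure_ge_le hε)
    _ = 2 * Real.exp (-ε ^ 2 / (2 * c)) := (two_mul _).symm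

end Concentration

end Talagrand

theorem stmt7_general {ι : Type*} [Fintype ι] {X : ι → Type*} [∀ i, MeasurableSpace (X i)]
    (μ : ∀ i, Measure (X i)) [∀ i, IsProbabilityMeasure (μ i)] (f : (∀ i, X i) → ℝ)
    (hf : Measurable f) (g : ι → (∀ i, X i) → ℝ) (σ2 : ℝ)
    (hstab : ∀ x y, f x - f y ≤ ∑ i, if x i ≠ y i then g i x else 0)
    (hvar : ∀ x, ∑ i, g i x ^ 2 ≤ σ2) (α : ℝ) (hα : 0 ≤ α) :
    Measure.pi μ {x | α < |f x - ∫ y, f y ∂Measure.pi μ|}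
      ≤ ENNReal.ofReal (2 * Real.exp (-α ^ 2 / (2 * σ2))) := by
  obtain ⟨x₀⟩ : Nonempty (∀ i, X i) := (Measure.pi μ).nonempty_of_neZero
  lift σ2 to ℝ≥0 using (Finset.sum_nonneg fun i _ => sq_nonneg (g i x₀)).trans (hvar x₀)
  exact Talagrand.measure_lt_abs_le_of_hasSubgaussianMGF
    (Talagrand.IsStable.hasSubgaussianMGF ⟨hstab, hvar⟩ hf) hα

/-- Talagrand's concentration inequality.  If
`f(x) − f(y) ≤ ∑ᵢ gᵢ(x)·1[xᵢ ≠ yᵢ]` with `gᵢ ≥ 0` and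
`supₓ ∑ᵢ gᵢ(x)² ≤ σ²`, then for independent coordinates (product measure),
`Pr[|f(X) − E f(X)| > α] ≤ 2 exp(−α²/(2σ²))`. -/
theorem stmt7 {𝓧 : Type*} [MeasurableSpace 𝓧] (n : ℕ)
    (μ : Fin n → Measure 𝓧) [∀ i, IsProbabilityMeasure (μ i)]
    (f : (Fin n → 𝓧) → ℝ) (hf : Measurable f) (B : ℝ) (hbd : ∀ x, |f x| ≤ B)
    (g : Fin n → (Fin n → 𝓧) → ℝ) (hg : ∀ i x, 0 ≤ g i x)
    (σ2 : ℝ)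
    (hstab : ∀ x y, f x - f y ≤ ∑ i, if x i ≠ y i then g i x else 0)
    (hvar : ∀ x, ∑ i, g i x ^ 2 ≤ σ2)
    (α : ℝ) (hα : 0 < α) :
    Measure.pi μ {x | α < |f x - ∫ y, f y ∂Measure.pi μ|}
      ≤ ENNReal.ofReal (2 * Real.exp (-α ^ 2 / (2 * σ2))) :=
  stmt7_general μ f hf g σ2 hstab hvar α hα.le
end

section
/- Let OPT(C) be the maximum total value of a feasible selection of k items (partitioned among d properties with capacities k_i summing to k, item values in [0,1], dummy zero-value items guaranteeing feasibility) from a sample C = (c_1,...,c_n) of n i.i.d. items. Then Pr[|OPT(C) − E[OPT(C)]| ≥ α] ≤ 2·exp(−α²/(2k)). -/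
open MeasureTheory Finset Classical

noncomputable section

/-- A feasible assignment of the `k = ∑ kᵢ` constraint slots (slot `⟨i, _⟩`
belongs to property `i`) to items of the sample `C` (or to dummies, `none`):
assigned items have the required property, and no item is used twice. -/
def FeasibleSel {𝓧 : Type*} (d n : ℕ) (kvec : Fin d → ℕ) (P : Fin d → Set 𝓧)
    (C : Fin n → 𝓧) (f : ((i : Fin d) × Fin (kvec i)) → Option (Fin n)) : Prop :=
  (∀ l j, f l = some j → C j ∈ P l.1) ∧
  ∀ l l' j, f l = some j → f l' = some j → l = l'

/-- The total value of a selection (dummies have value 0). -/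
def selValue {𝓧 : Type*} (d n : ℕ) (kvec : Fin d → ℕ) (v : Fin d → 𝓧 → ℝ)
    (C : Fin n → 𝓧) (f : ((i : Fin d) × Fin (kvec i)) → Option (Fin n)) : ℝ :=
  ∑ l : (i : Fin d) × Fin (kvec i), (f l).elim 0 fun j => v l.1 (C j)

/-- `OPT(C)`: the maximum value of a feasible selection of `k` items from `C`. -/
def OPTval {𝓧 : Type*} (d n : ℕ) (kvec : Fin d → ℕ) (P : Fin d → Set 𝓧)
    (v : Fin d → 𝓧 → ℝ) (C : Fin n → 𝓧) : ℝ :=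
  ⨆ f : {f : ((i : Fin d) × Fin (kvec i)) → Option (Fin n) // FeasibleSel d n kvec P C f},
    selValue d n kvec v C f.1

/-
Let `Q f x` be the infimum, over finite mixtures of points, of the average of `f` plus half the sum
over `j` of the squared mass of the points that differ from `x` at `j`. On a product space
`∫ e ^ Q f ≤ e ^ ∫ f` and `∫ e ^ (-f) ≤ e ^ (-∫ Q f)`. In one coordinate these bounds follow from
two scalar inequalities for the relaxed excess `ρ`, namely `e ^ ρ w ≤ 1 + w` and
`e ^ (-w) ≤ 1 - ρ w`, and they tensorize because splitting the mass of a mixture in one coordinate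
adds to the cost a term that Jensen's inequality bounds by the average of the one-coordinate costs.
They replace Talagrand's convex distance and give concentration around the mean instead of the
median.

If changing coordinates of `x` lowers `f` by at most their `g x`-weight, where `∑ j, g x j ^ 2 ≤ c`,
then Young's inequality gives `t * f - c * t ^ 2 / 2 ≤ Q (t * f)` for `t ≥ 0`, so `f` is subgaussian
with parameter `c`. For `OPT` the weights are the indicator of the items of an optimal selection:
transplanting that selection to another sample loses at most `1` for each of its changed items.
-/

section OneDimensional

/-- The minimum of `s ↦ (1 - s) * w + s ^ 2 / 2` over `s ∈ [0, 1]` for `w ≥ 0`, attained at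
`s = min w 1`: the cheapest way to bring down an excess `w` by giving up a fraction `s` of it
at the price `s ^ 2 / 2`. -/
def relaxedExcess (w : ℝ) : ℝ := (1 - min w 1) * w + min w 1 ^ 2 / 2

theorem continuous_relaxedExcess : Continuous relaxedExcess := by
  unfold relaxedExcess
  fun_prop

theorem relaxedExcess_le {s : ℝ} (hs : s ≤ 1) (w : ℝ) :
    relaxedExcess w ≤ (1 - s) * w + s ^ 2 / 2 := by
  unfold relaxedExcess
  rcases le_total w 1 with hw | hw
  · rw [min_eq_left hw]
    nlinarith [sq_nonneg (s - w)]
  · rw [min_eq_right hw]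
    nlinarith [sq_nonneg (s - 1), mul_nonneg (sub_nonneg.2 hs) (sub_nonneg.2 hw)]

theorem exp_relaxedExcess_le {w : ℝ} (hw : 0 ≤ w) : Real.exp (relaxedExcess w) ≤ 1 + w := by
  rw [← Real.le_log_iff_exp_le (by linarith)]
  refine le_trans ?_ (Real.le_log_one_add_of_nonneg hw)
  rw [le_div_iff₀ (by linarith), relaxedExcess]
  rcases le_total w 1 with h | h
  · rw [min_eq_left h]
    nlinarith [pow_nonneg hw 3]
  · rw [min_eq_right h]
    linarith

theorem exp_neg_le_one_sub_relaxedExcess {w : ℝ} (hw : 0 ≤ w) :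
    Real.exp (-w) ≤ 1 - relaxedExcess w := by
  have quadratic_le := Real.quadratic_le_exp_of_nonneg hw
  rw [Real.exp_neg, inv_le_iff_one_le_mul₀ (Real.exp_pos w), relaxedExcess]
  rcases le_total w 1 with h | h
  · rw [min_eq_left h]
    have factor_pos : 0 ≤ 1 - ((1 - w) * w + w ^ 2 / 2) := by nlinarith
    nlinarith [mul_le_mul_of_nonneg_left quadratic_le factor_pos, sq_nonneg (w ^ 2)]
  · rw [min_eq_right h]
    nlinarith

variable {𝓧 : Type*} {h : 𝓧 → ℝ}

/-- The weak infimum convolution of `h`, that is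
`t ↦ ⨅ (s ∈ [0, 1]) (u), (1 - s) * h t + s * h u + s ^ 2 / 2`, with the infimum computed
explicitly; it is meant for functions `h` that are bounded below. -/
def weakInfConv (h : 𝓧 → ℝ) (t : 𝓧) : ℝ := (⨅ u, h u) + relaxedExcess (h t - ⨅ u, h u)

theorem weakInfConv_le (hbdd : BddBelow (Set.range h)) (t u : 𝓧) {s : ℝ} (hs : s ∈ Set.Icc 0 1) :
    weakInfConv h t ≤ (1 - s) * h t + s * h u + s ^ 2 / 2 := by
  have excess_le := relaxedExcess_le hs.2 (h t - ⨅ u, h u)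
  have iInf_le := mul_le_mul_of_nonneg_left (ciInf_le hbdd u) hs.1
  unfold weakInfConv
  linarith

theorem exists_le_weakInfConv_add [Nonempty 𝓧] (hbdd : BddBelow (Set.range h)) (t : 𝓧)
    {ε : ℝ} (hε : 0 < ε) :
    ∃ s ∈ Set.Icc (0 : ℝ) 1, ∃ u, (1 - s) * h t + s * h u + s ^ 2 / 2 ≤ weakInfConv h t + ε := by
  obtain ⟨u, hu⟩ := exists_lt_of_ciInf_lt (lt_add_of_pos_right (⨅ u, h u) hε)
  have hs : min (h t - ⨅ u, h u) 1 ∈ Set.Icc (0 : ℝ) 1 :=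
    ⟨le_min (sub_nonneg.2 (ciInf_le hbdd t)) zero_le_one, min_le_right _ _⟩
  refine ⟨_, hs, u, ?_⟩
  have move_le := mul_le_mul_of_nonneg_left hu.le hs.1
  have price_le := mul_le_mul_of_nonneg_right hs.2 hε.le
  unfold weakInfConv relaxedExcess
  linarith

theorem sum_mul_weakInfConv_le [Nonempty 𝓧] {ι : Type*} [Fintype ι] {w : ι → ℝ}
    (hw : w ∈ stdSimplex ℝ ι) {h : ι → 𝓧 → ℝ} (hbdd : ∀ i, BddBelow (Set.range (h i)))
    (hbdd_sum : BddBelow (Set.range fun t => ∑ i, w i * h i t)) (t : 𝓧) :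
    ∑ i, w i * weakInfConv (h i) t ≤ weakInfConv (fun t => ∑ i, w i * h i t) t := by
  refine le_of_forall_pos_le_add fun ε hε => ?_
  obtain ⟨s, hs, u, hsu⟩ := exists_le_weakInfConv_add hbdd_sum t hε
  calc ∑ i, w i * weakInfConv (h i) t
      ≤ ∑ i, w i * ((1 - s) * h i t + s * h i u + s ^ 2 / 2) :=
        Finset.sum_le_sum fun i _ =>
          mul_le_mul_of_nonneg_left (weakInfConv_le (hbdd i) t u hs) (hw.1 i)
    _ = (1 - s) * ∑ i, w i * h i t + s * ∑ i, w i * h i u + s ^ 2 / 2 := by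
        simp only [mul_add, Finset.sum_add_distrib, ← Finset.sum_mul, hw.2, one_mul,
          Finset.mul_sum, mul_left_comm]
    _ ≤ weakInfConv (fun t => ∑ i, w i * h i t) t + ε := hsu

end OneDimensional

/-- Bounded measurable real functions, the class on which the functional inequalities below are
proved. The bound is pointwise rather than almost everywhere because the infima in `weakInfConv`
and `IsWeakInfConvMinorant` are pointwise. -/
structure IsBddMeasurable {Ω : Type*} [MeasurableSpace Ω] (f : Ω → ℝ) : Prop where
  measurable : Measurable f
  bounded : ∃ B, ∀ x, |f x| ≤ B

namespace IsBddMeasurable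

variable {Ω Ω' : Type*} [MeasurableSpace Ω] [MeasurableSpace Ω'] {f : Ω → ℝ}

theorem comp (hf : IsBddMeasurable f) {φ : Ω' → Ω} (hφ : Measurable φ) :
    IsBddMeasurable fun x => f (φ x) :=
  ⟨hf.measurable.comp hφ, hf.bounded.imp fun _ hB x => hB (φ x)⟩

theorem continuous_comp (hf : IsBddMeasurable f) {φ : ℝ → ℝ} (hφ : Continuous φ) :
    IsBddMeasurable fun x => φ (f x) := by
  obtain ⟨B, hB⟩ := hf.bounded
  obtain ⟨B', hB'⟩ := (isCompact_Icc (a := -B) (b := B)).exists_bound_of_continuousOn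
    hφ.continuousOn
  exact ⟨hφ.measurable.comp hf.measurable, B', fun x => hB' _ (abs_le.1 (hB x))⟩

theorem sum_mul {ι : Type*} [Fintype ι] (w : ι → ℝ) {f : ι → Ω → ℝ}
    (hf : ∀ i, IsBddMeasurable (f i)) : IsBddMeasurable fun x => ∑ i, w i * f i x := by
  choose B hB using fun i => (hf i).bounded
  refine ⟨Finset.measurable_sum _ fun i _ => (hf i).measurable.const_mul _,
    ∑ i, |w i| * B i, fun x => (Finset.abs_sum_le_sum_abs _ _).trans ?_⟩
  refine Finset.sum_le_sum fun i _ => ?_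
  rw [abs_mul]
  exact mul_le_mul_of_nonneg_left (hB i x) (abs_nonneg _)

theorem bddBelow_range (hf : IsBddMeasurable f) : BddBelow (Set.range f) := by
  obtain ⟨B, hB⟩ := hf.bounded
  exact ⟨-B, Set.forall_mem_range.2 fun x => (abs_le.1 (hB x)).1⟩

theorem exp (hf : IsBddMeasurable f) : IsBddMeasurable fun x => Real.exp (f x) :=
  hf.continuous_comp Real.continuous_exp

theorem neg (hf : IsBddMeasurable f) : IsBddMeasurable fun x => -f x :=
  hf.continuous_comp continuous_neg

theorem const_mul (hf : IsBddMeasurable f) (c : ℝ) : IsBddMeasurable fun x => c * f x :=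
  hf.continuous_comp (continuous_const_mul c)

theorem sub_const (hf : IsBddMeasurable f) (c : ℝ) : IsBddMeasurable fun x => f x - c :=
  hf.continuous_comp (continuous_sub_right c)

theorem weakInfConv (hf : IsBddMeasurable f) : IsBddMeasurable (weakInfConv f) :=
  (hf.sub_const _).continuous_comp (continuous_relaxedExcess.const_add _)

theorem integrable (hf : IsBddMeasurable f) (μ : Measure Ω) [IsFiniteMeasure μ] :
    Integrable f μ := by
  obtain ⟨B, hB⟩ := hf.bounded
  exact .of_bound hf.measurable.aestronglyMeasurable B (.of_forall hB)

theorem integral_exp_pos (hf : IsBddMeasurable f) (μ : Measure Ω) [IsProbabilityMeasure μ] :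
    0 < ∫ x, Real.exp (f x) ∂μ :=
  MeasureTheory.integral_exp_pos (hf.exp.integrable μ)

theorem integral_left {f : Ω × Ω' → ℝ} (hf : IsBddMeasurable f) (μ : Measure Ω)
    [IsProbabilityMeasure μ] : IsBddMeasurable fun y => ∫ x, f (x, y) ∂μ := by
  obtain ⟨B, hB⟩ := hf.bounded
  refine ⟨hf.measurable.stronglyMeasurable.integral_prod_left'.measurable, B, fun y => ?_⟩
  simpa using norm_integral_le_of_norm_le_const (μ := μ) (f := fun x => f (x, y))
    (.of_forall fun x => hB (x, y))

theorem log_integral_exp_left {f : Ω × Ω' → ℝ} (hf : IsBddMeasurable f) (μ : Measure Ω)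
    [IsProbabilityMeasure μ] :
    IsBddMeasurable fun y => Real.log (∫ x, Real.exp (f (x, y)) ∂μ) := by
  obtain ⟨B, hB⟩ := hf.bounded
  refine ⟨Real.measurable_log.comp (hf.exp.integral_left μ).measurable, B, fun y => ?_⟩
  have slice : IsBddMeasurable fun x => f (x, y) := hf.comp measurable_prodMk_right
  have integral_pos := slice.integral_exp_pos μ
  have lower : Real.exp (-B) ≤ ∫ x, Real.exp (f (x, y)) ∂μ := by
    simpa using integral_mono (integrable_const (μ := μ) _) (slice.exp.integrable μ)
      fun x => Real.exp_le_exp.2 (abs_le.1 (hB (x, y))).1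
  have upper : ∫ x, Real.exp (f (x, y)) ∂μ ≤ Real.exp B := by
    simpa using integral_mono (slice.exp.integrable μ) (integrable_const (μ := μ) _)
      fun x => Real.exp_le_exp.2 (abs_le.1 (hB (x, y))).2
  exact abs_le.2 ⟨(Real.le_log_iff_exp_le integral_pos).2 lower,
    (Real.log_le_iff_le_exp integral_pos).2 upper⟩

end IsBddMeasurable

section OneDimensionalInequalities

variable {𝓧 : Type*} [MeasurableSpace 𝓧] {h : 𝓧 → ℝ}

theorem integral_exp_weakInfConv_le (μ : Measure 𝓧) [IsProbabilityMeasure μ]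
    (hh : IsBddMeasurable h) : ∫ t, Real.exp (weakInfConv h t) ∂μ ≤ Real.exp (∫ t, h t ∂μ) := by
  set m := ⨅ u, h u with hm
  have pointwise (t : 𝓧) : Real.exp (weakInfConv h t) ≤ Real.exp m * (1 + (h t - m)) := by
    rw [weakInfConv, Real.exp_add, ← hm]
    gcongr
    exact exp_relaxedExcess_le (sub_nonneg.2 (ciInf_le hh.bddBelow_range t))
  have integrable_excess := (hh.sub_const m).integrable μ
  calc ∫ t, Real.exp (weakInfConv h t) ∂μ
      ≤ ∫ t, Real.exp m * (1 + (h t - m)) ∂μ :=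
        integral_mono (hh.weakInfConv.exp.integrable μ)
          (((integrable_const 1).add integrable_excess).const_mul _) pointwise
    _ = Real.exp m * (1 + (∫ t, h t ∂μ - m)) := by
        rw [integral_const_mul, integral_add (integrable_const _) integrable_excess,
          integral_sub (hh.integrable μ) (integrable_const _)]
        simp
    _ ≤ Real.exp m * Real.exp (∫ t, h t ∂μ - m) := by
        gcongr
        rw [add_comm]
        exact Real.add_one_le_exp _
    _ = Real.exp (∫ t, h t ∂μ) := by rw [← Real.exp_add, add_sub_cancel]

theorem integral_exp_neg_le_exp_neg_integral_weakInfConv (μ : Measure 𝓧) [IsProbabilityMeasure μ]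
    (hh : IsBddMeasurable h) :
    ∫ t, Real.exp (-h t) ∂μ ≤ Real.exp (-∫ t, weakInfConv h t ∂μ) := by
  set m := ⨅ u, h u with hm
  have pointwise (t : 𝓧) :
      Real.exp (-h t) ≤ Real.exp (-m) * (1 - (weakInfConv h t - m)) := by
    rw [weakInfConv, ← hm, add_sub_cancel_left, ← neg_add_cancel_left m (-h t), Real.exp_add,
      ← sub_eq_add_neg, ← neg_sub (h t)]
    gcongr
    exact exp_neg_le_one_sub_relaxedExcess (sub_nonneg.2 (ciInf_le hh.bddBelow_range t))
  have integrable_conv := (hh.weakInfConv.sub_const m).integrable μ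
  calc ∫ t, Real.exp (-h t) ∂μ
      ≤ ∫ t, Real.exp (-m) * (1 - (weakInfConv h t - m)) ∂μ :=
        integral_mono (hh.neg.exp.integrable μ)
          (((integrable_const 1).sub integrable_conv).const_mul _) pointwise
    _ = Real.exp (-m) * (1 - (∫ t, weakInfConv h t ∂μ - m)) := by
        rw [integral_const_mul, integral_sub (integrable_const _) integrable_conv,
          integral_sub (hh.weakInfConv.integrable μ) (integrable_const _)]
        simp
    _ ≤ Real.exp (-m) * Real.exp (-(∫ t, weakInfConv h t ∂μ - m)) := by
        gcongr
        exact Real.one_sub_le_exp_neg _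
    _ = Real.exp (-∫ t, weakInfConv h t ∂μ) := by
        rw [← Real.exp_add]
        ring_nf

end OneDimensionalInequalities

section WeakTransport

variable {n : ℕ} {𝓧 : Fin n → Type*} {ι : Type*} [Fintype ι]

/-- The weight of those points of the weighted family `Y` whose `j`-th coordinate differs
from that of `x`. -/
def movedMass (x : ∀ j, 𝓧 j) (w : ι → ℝ) (Y : ι → ∀ j, 𝓧 j) (j : Fin n) : ℝ :=
  ∑ i with Y i j ≠ x j, w i

/-- Marton's weak transport cost from the point `x` to the weighted family `Y`. -/
def weakTransportCost (x : ∀ j, 𝓧 j) (w : ι → ℝ) (Y : ι → ∀ j, 𝓧 j) : ℝ :=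
  ∑ j, movedMass x w Y j ^ 2 / 2

/-- `F` lies below the infimum convolution of `f` with the weak transport cost. Mixtures of points
are encoded as finite weighted families. -/
def IsWeakInfConvMinorant (F f : (∀ j, 𝓧 j) → ℝ) : Prop :=
  ∀ (x : ∀ j, 𝓧 j) (ι : Type) [Fintype ι] (w : ι → ℝ) (Y : ι → ∀ j, 𝓧 j), w ∈ stdSimplex ℝ ι →
    F x ≤ ∑ i, w i * f (Y i) + weakTransportCost x w Y

theorem IsWeakInfConvMinorant.le {F f : (∀ j, 𝓧 j) → ℝ} (H : IsWeakInfConvMinorant F f)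
    (x : ∀ j, 𝓧 j) : F x ≤ f x := by
  simpa [weakTransportCost, movedMass] using
    H x Unit (fun _ => 1) (fun _ => x) ⟨fun _ => zero_le_one, by simp⟩

end WeakTransport

section Splitting

variable {n : ℕ} {𝓧 : Fin (n + 1) → Type*} {ι : Type*}

/-- The weights after moving a fraction `s i` of the mass of each point `i` to a second copy
of it. -/
def splitWeight (w s : ι → ℝ) : ι ⊕ ι → ℝ :=
  Sum.elim (fun i => w i * (1 - s i)) fun i => w i * s i

/-- The points carrying `splitWeight`: the copies of `Y i` that stay put start with `t`, those
that move start with `u i`. -/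
def splitPoint (t : 𝓧 0) (u : ι → 𝓧 0) (Y : ι → ∀ j : Fin n, 𝓧 j.succ) : ι ⊕ ι → ∀ j, 𝓧 j :=
  Sum.elim (fun i => Fin.cons t (Y i)) fun i => Fin.cons (u i) (Y i)

variable [Fintype ι] {w s : ι → ℝ}

theorem splitWeight_mem_stdSimplex (hw : w ∈ stdSimplex ℝ ι) (hs : ∀ i, s i ∈ Set.Icc 0 1) :
    splitWeight w s ∈ stdSimplex ℝ (ι ⊕ ι) := by
  constructor
  · rintro (i | i)
    · exact mul_nonneg (hw.1 i) (sub_nonneg.2 (hs i).2)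
    · exact mul_nonneg (hw.1 i) (hs i).1
  · simp [splitWeight, mul_sub, Finset.sum_sub_distrib, hw.2]

theorem movedMass_split_succ (x : ∀ j : Fin n, 𝓧 j.succ) (t : 𝓧 0) (u : ι → 𝓧 0)
    (Y : ι → ∀ j : Fin n, 𝓧 j.succ) (j : Fin n) :
    movedMass (Fin.cons t x) (splitWeight w s) (splitPoint t u Y) j.succ = movedMass x w Y j := by
  simp only [movedMass, splitWeight, splitPoint, Finset.sum_filter, Fintype.sum_sum_type,
    Sum.elim_inl, Sum.elim_inr, Fin.cons_succ, ← Finset.sum_add_distrib]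
  refine Finset.sum_congr rfl fun i _ => ?_
  split_ifs <;> ring

theorem movedMass_split_zero_mem_Icc (hw : ∀ i, 0 ≤ w i) (hs : ∀ i, 0 ≤ s i)
    (x : ∀ j : Fin n, 𝓧 j.succ) (t : 𝓧 0) (u : ι → 𝓧 0) (Y : ι → ∀ j : Fin n, 𝓧 j.succ) :
    movedMass (Fin.cons t x) (splitWeight w s) (splitPoint t u Y) 0 ∈
      Set.Icc 0 (∑ i, w i * s i) := by
  have moved_eq : movedMass (Fin.cons t x) (splitWeight w s) (splitPoint t u Y) 0 =
      ∑ i with u i ≠ t, w i * s i := by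
    simp [movedMass, splitWeight, splitPoint, Finset.sum_filter]
  rw [moved_eq]
  exact ⟨Finset.sum_nonneg fun i _ => mul_nonneg (hw i) (hs i),
    Finset.sum_le_univ_sum_of_nonneg fun i => mul_nonneg (hw i) (hs i)⟩

theorem weakTransportCost_split_le (hw : w ∈ stdSimplex ℝ ι) (hs : ∀ i, 0 ≤ s i)
    (x : ∀ j : Fin n, 𝓧 j.succ) (t : 𝓧 0) (u : ι → 𝓧 0) (Y : ι → ∀ j : Fin n, 𝓧 j.succ) :
    weakTransportCost (Fin.cons t x) (splitWeight w s) (splitPoint t u Y) ≤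
      ∑ i, w i * (s i ^ 2 / 2) + weakTransportCost x w Y := by
  have moved := movedMass_split_zero_mem_Icc hw.1 hs x t u Y
  have jensen : (∑ i, w i * s i) ^ 2 ≤ ∑ i, w i * s i ^ 2 :=
    Real.pow_arith_mean_le_arith_mean_pow univ w s (fun i _ => hw.1 i) hw.2 (fun i _ => hs i) 2
  simp only [weakTransportCost, Fin.sum_univ_succ, movedMass_split_succ, ← mul_div_assoc,
    ← Finset.sum_div]
  have first_le := (pow_le_pow_left₀ moved.1 moved.2 2).trans jensen
  linarith

end Splitting

section Tensorization

variable {n : ℕ} {𝓧 : Fin (n + 1) → Type*} {F f : (∀ j, 𝓧 j) → ℝ}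

theorem IsWeakInfConvMinorant.cons_le_sum_mixture (H : IsWeakInfConvMinorant F f)
    {ι : Type} [Fintype ι] {w s : ι → ℝ} (hw : w ∈ stdSimplex ℝ ι) (hs : ∀ i, s i ∈ Set.Icc 0 1)
    (t : 𝓧 0) (x : ∀ j : Fin n, 𝓧 j.succ) (u : ι → 𝓧 0) (Y : ι → ∀ j : Fin n, 𝓧 j.succ) :
    F (Fin.cons t x) ≤ ∑ i, w i * ((1 - s i) * f (Fin.cons t (Y i)) +
      s i * f (Fin.cons (u i) (Y i)) + s i ^ 2 / 2) + weakTransportCost x w Y := by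
  have minorant := H (Fin.cons t x) (ι ⊕ ι) (splitWeight w s) (splitPoint t u Y)
    (splitWeight_mem_stdSimplex hw hs)
  have cost_le := weakTransportCost_split_le hw (fun i => (hs i).1) x t u Y
  simp only [splitWeight, splitPoint, Fintype.sum_sum_type, Sum.elim_inl, Sum.elim_inr,
    mul_assoc] at minorant cost_le
  simp only [mul_add, Finset.sum_add_distrib]
  linarith

theorem IsWeakInfConvMinorant.cons_le_sum_weakInfConv [Nonempty (𝓧 0)]
    (H : IsWeakInfConvMinorant F f)
    (hbdd : ∀ x : ∀ j : Fin n, 𝓧 j.succ, BddBelow (Set.range fun t => f (Fin.cons t x)))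
    {ι : Type} [Fintype ι] {w : ι → ℝ} (hw : w ∈ stdSimplex ℝ ι)
    (t : 𝓧 0) (x : ∀ j : Fin n, 𝓧 j.succ) (Y : ι → ∀ j : Fin n, 𝓧 j.succ) :
    F (Fin.cons t x) ≤
      ∑ i, w i * weakInfConv (fun u => f (Fin.cons u (Y i))) t + weakTransportCost x w Y := by
  refine le_of_forall_pos_le_add fun ε hε => ?_
  choose s hs u hsu using fun i => exists_le_weakInfConv_add (hbdd (Y i)) t hε
  calc F (Fin.cons t x)
      ≤ ∑ i, w i * ((1 - s i) * f (Fin.cons t (Y i)) + s i * f (Fin.cons (u i) (Y i)) +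
          s i ^ 2 / 2) + weakTransportCost x w Y := H.cons_le_sum_mixture hw hs t x u Y
    _ ≤ ∑ i, w i * (weakInfConv (fun u => f (Fin.cons u (Y i))) t + ε) +
          weakTransportCost x w Y := by
        gcongr ?_ + _
        exact Finset.sum_le_sum fun i _ => mul_le_mul_of_nonneg_left (hsu i) (hw.1 i)
    _ = ∑ i, w i * weakInfConv (fun u => f (Fin.cons u (Y i))) t + weakTransportCost x w Y + ε := by
        simp only [mul_add, Finset.sum_add_distrib, ← Finset.sum_mul, hw.2]
        ring

variable [∀ j, MeasurableSpace (𝓧 j)]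

theorem measurable_finCons :
    Measurable fun p : 𝓧 0 × (∀ j : Fin n, 𝓧 j.succ) => (Fin.cons p.1 p.2 : ∀ j, 𝓧 j) :=
  measurable_pi_iff.2 <| Fin.cases measurable_fst fun j =>
    (measurable_pi_apply j).comp measurable_snd

theorem measurePreserving_finCons (μ : ∀ j, Measure (𝓧 j)) [∀ j, SigmaFinite (μ j)] :
    MeasurePreserving (fun p : 𝓧 0 × (∀ j : Fin n, 𝓧 j.succ) => (Fin.cons p.1 p.2 : ∀ j, 𝓧 j))
      ((μ 0).prod (Measure.pi fun j : Fin n => μ j.succ)) (Measure.pi μ) := by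
  have insertNth_eq_cons : (fun p : 𝓧 0 × (∀ j : Fin n, 𝓧 j.succ) => (Fin.cons p.1 p.2 : ∀ j, 𝓧 j))
      = (MeasurableEquiv.piFinSuccAbove 𝓧 0).symm :=
    funext fun p => (Fin.insertNth_zero p.1 p.2).symm
  rw [insertNth_eq_cons]
  exact (measurePreserving_piFinSuccAbove μ 0).symm

theorem integral_pi_finCons (μ : ∀ j, Measure (𝓧 j)) [∀ j, SigmaFinite (μ j)]
    (hf : Integrable f (Measure.pi μ)) :
    ∫ x, f x ∂Measure.pi μ =
      ∫ x, ∫ t, f (Fin.cons t x) ∂μ 0 ∂Measure.pi fun j : Fin n => μ j.succ := by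
  have preserving := measurePreserving_finCons μ
  calc ∫ x, f x ∂Measure.pi μ
      = ∫ p : 𝓧 0 × (∀ j : Fin n, 𝓧 j.succ), f (Fin.cons p.1 p.2)
          ∂(μ 0).prod (Measure.pi fun j : Fin n => μ j.succ) := by
        rw [← preserving.map_eq, integral_map preserving.measurable.aemeasurable]
        rw [preserving.map_eq]
        exact hf.aestronglyMeasurable
    _ = ∫ x, ∫ t, f (Fin.cons t x) ∂μ 0 ∂Measure.pi fun j : Fin n => μ j.succ :=
        integral_prod_symm _ (preserving.integrable_comp_of_integrable hf)

namespace IsBddMeasurable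

variable (μ : Measure (𝓧 0)) [IsProbabilityMeasure μ]

theorem finCons_left (hf : IsBddMeasurable f) (x : ∀ j : Fin n, 𝓧 j.succ) :
    IsBddMeasurable fun t => f (Fin.cons t x) :=
  hf.comp (measurable_finCons.comp measurable_prodMk_right)

theorem integral_finCons (hf : IsBddMeasurable f) :
    IsBddMeasurable fun x : ∀ j : Fin n, 𝓧 j.succ => ∫ t, f (Fin.cons t x) ∂μ :=
  (hf.comp measurable_finCons).integral_left μ

theorem log_integral_exp_finCons (hf : IsBddMeasurable f) :
    IsBddMeasurable fun x : ∀ j : Fin n, 𝓧 j.succ =>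
      Real.log (∫ t, Real.exp (f (Fin.cons t x)) ∂μ) :=
  (hf.comp measurable_finCons).log_integral_exp_left μ

end IsBddMeasurable

namespace IsWeakInfConvMinorant

theorem log_integral_exp_finCons (H : IsWeakInfConvMinorant F f) (hF : IsBddMeasurable F)
    (hf : IsBddMeasurable f) (μ : Measure (𝓧 0)) [IsProbabilityMeasure μ] :
    IsWeakInfConvMinorant
      (fun x : ∀ j : Fin n, 𝓧 j.succ => Real.log (∫ t, Real.exp (F (Fin.cons t x)) ∂μ))
      (fun x => ∫ t, f (Fin.cons t x) ∂μ) := by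
  intro x ι _ w Y hw
  have : Nonempty (𝓧 0) := μ.nonempty_of_neZero
  set c := weakTransportCost x w Y
  set g : 𝓧 0 → ℝ := fun t => ∑ i, w i * f (Fin.cons t (Y i)) with g_def
  have hg : IsBddMeasurable g := .sum_mul w fun i => hf.finCons_left (Y i)
  have F_le (t : 𝓧 0) : F (Fin.cons t x) ≤ weakInfConv g t + c :=
    (H.cons_le_sum_weakInfConv (fun x => (hf.finCons_left x).bddBelow_range) hw t x Y).trans <|
      add_le_add_left (sum_mul_weakInfConv_le hw
        (fun i => (hf.finCons_left (Y i)).bddBelow_range) hg.bddBelow_range t) c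
  rw [Real.log_le_iff_le_exp ((hF.finCons_left x).integral_exp_pos μ)]
  calc ∫ t, Real.exp (F (Fin.cons t x)) ∂μ
      ≤ ∫ t, Real.exp (weakInfConv g t) * Real.exp c ∂μ :=
        integral_mono ((hF.finCons_left x).exp.integrable μ)
          ((hg.weakInfConv.exp.integrable μ).mul_const _)
          fun t => (Real.exp_le_exp.2 (F_le t)).trans_eq (Real.exp_add _ _)
    _ ≤ Real.exp (∫ t, g t ∂μ) * Real.exp c := by
        rw [integral_mul_const]
        gcongr
        exact integral_exp_weakInfConv_le μ hg
    _ = Real.exp (∑ i, w i * ∫ t, f (Fin.cons t (Y i)) ∂μ + c) := by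
        rw [← Real.exp_add, g_def, integral_finsetSum _ fun i _ =>
          ((hf.finCons_left (Y i)).integrable μ).const_mul (w i)]
        simp only [integral_const_mul]

theorem integral_finCons (H : IsWeakInfConvMinorant F f) (hF : IsBddMeasurable F)
    (hf : IsBddMeasurable f) (μ : Measure (𝓧 0)) [IsProbabilityMeasure μ] :
    IsWeakInfConvMinorant (fun x : ∀ j : Fin n, 𝓧 j.succ => ∫ t, F (Fin.cons t x) ∂μ)
      (fun x => -Real.log (∫ t, Real.exp (-f (Fin.cons t x)) ∂μ)) := by
  intro x ι _ w Y hw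
  have : Nonempty (𝓧 0) := μ.nonempty_of_neZero
  set c := weakTransportCost x w Y
  have F_le := fun t =>
    H.cons_le_sum_weakInfConv (fun x => (hf.finCons_left x).bddBelow_range) hw t x Y
  have slice (i : ι) : IsBddMeasurable (weakInfConv fun t => f (Fin.cons t (Y i))) :=
    (hf.finCons_left (Y i)).weakInfConv
  have integral_le (i : ι) : ∫ t, weakInfConv (fun u => f (Fin.cons u (Y i))) t ∂μ ≤
      -Real.log (∫ t, Real.exp (-f (Fin.cons t (Y i))) ∂μ) := by
    rw [le_neg, Real.log_le_iff_le_exp ((hf.finCons_left (Y i)).neg.integral_exp_pos μ)]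
    exact integral_exp_neg_le_exp_neg_integral_weakInfConv μ (hf.finCons_left (Y i))
  have integrable_sum : Integrable
      (fun t => ∑ i, w i * weakInfConv (fun u => f (Fin.cons u (Y i))) t) μ :=
    (IsBddMeasurable.sum_mul w slice).integrable μ
  calc ∫ t, F (Fin.cons t x) ∂μ
      ≤ ∫ t, (∑ i, w i * weakInfConv (fun u => f (Fin.cons u (Y i))) t + c) ∂μ :=
        integral_mono ((hF.finCons_left x).integrable μ)
          (integrable_sum.add (integrable_const c)) F_le
    _ = ∑ i, w i * ∫ t, weakInfConv (fun u => f (Fin.cons u (Y i))) t ∂μ + c := by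
        rw [integral_add integrable_sum (integrable_const c),
          integral_finsetSum _ fun i _ => ((slice i).integrable μ).const_mul (w i)]
        simp [integral_const_mul]
    _ ≤ ∑ i, w i * -Real.log (∫ t, Real.exp (-f (Fin.cons t (Y i))) ∂μ) + c := by
        gcongr with i
        · exact hw.1 i
        · exact integral_le i

end IsWeakInfConvMinorant

end Tensorization

section Concentration

variable {n : ℕ} {𝓧 : Fin n → Type*} [∀ j, MeasurableSpace (𝓧 j)] {F f : (∀ j, 𝓧 j) → ℝ}
  (μ : ∀ j, Measure (𝓧 j)) [∀ j, IsProbabilityMeasure (μ j)]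

namespace IsWeakInfConvMinorant

theorem integral_exp_le (H : IsWeakInfConvMinorant F f)
    (hF : IsBddMeasurable F) (hf : IsBddMeasurable f) :
    ∫ x, Real.exp (F x) ∂Measure.pi μ ≤ Real.exp (∫ x, f x ∂Measure.pi μ) := by
  induction n with
  | zero =>
    rw [integral_unique, integral_unique]
    simpa using H.le _
  | succ n ih =>
    rw [integral_pi_finCons μ (hF.exp.integrable _), integral_pi_finCons μ (hf.integrable _)]
    simpa only [Real.exp_log ((hF.finCons_left _).integral_exp_pos (μ 0))] using
      ih (fun j => μ j.succ) (H.log_integral_exp_finCons hF hf (μ 0))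
        (hF.log_integral_exp_finCons (μ 0)) (hf.integral_finCons (μ 0))

theorem integral_exp_neg_le (H : IsWeakInfConvMinorant F f) (hF : IsBddMeasurable F)
    (hf : IsBddMeasurable f) :
    ∫ x, Real.exp (-f x) ∂Measure.pi μ ≤ Real.exp (-∫ x, F x ∂Measure.pi μ) := by
  induction n with
  | zero =>
    rw [integral_unique, integral_unique]
    simpa using H.le _
  | succ n ih =>
    rw [integral_pi_finCons μ (hf.neg.exp.integrable _), integral_pi_finCons μ (hF.integrable _)]
    simpa only [neg_neg, Real.exp_log ((hf.neg.finCons_left _).integral_exp_pos (μ 0))] using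
      ih (fun j => μ j.succ) (H.integral_finCons hF hf (μ 0))
        (hF.integral_finCons (μ 0)) (hf.neg.log_integral_exp_finCons (μ 0)).neg

end IsWeakInfConvMinorant

theorem hasSubgaussianMGF_of_isWeakInfConvMinorant (hf : IsBddMeasurable f) {c : NNReal}
    (H : ∀ t : ℝ, 0 ≤ t →
      IsWeakInfConvMinorant (fun x => t * f x - c * t ^ 2 / 2) fun x => t * f x) :
    ProbabilityTheory.HasSubgaussianMGF (fun x => f x - ∫ y, f y ∂Measure.pi μ) c
      (Measure.pi μ) where
  integrable_exp_mul t := ((hf.sub_const _).const_mul t).exp.integrable _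
  mgf_le t := by
    set E := ∫ y, f y ∂Measure.pi μ with E_def
    suffices ∫ x, Real.exp (t * f x) ∂Measure.pi μ ≤ Real.exp (c * t ^ 2 / 2 + t * E) by
      simpa only [ProbabilityTheory.mgf, mul_sub, Real.exp_sub, integral_div,
        div_le_iff₀ (Real.exp_pos _), ← Real.exp_add] using this
    rcases le_total 0 t with ht | ht
    · have upper := (H t ht).integral_exp_le μ ((hf.const_mul t).sub_const _) (hf.const_mul t)
      simpa only [Real.exp_sub, integral_div, integral_const_mul, div_le_iff₀ (Real.exp_pos _),
        ← Real.exp_add, ← E_def, add_comm (t * E)] using upper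
    · have lower := (H (-t) (neg_nonneg.2 ht)).integral_exp_neg_le μ
        ((hf.const_mul (-t)).sub_const _) (hf.const_mul (-t))
      rw [integral_sub ((hf.const_mul (-t)).integrable _) (integrable_const _),
        integral_const_mul, ← E_def] at lower
      simpa [sub_eq_add_neg] using lower

theorem measureReal_abs_ge_le_of_hasSubgaussianMGF {Ω : Type*} [MeasurableSpace Ω]
    {ν : Measure Ω} {X : Ω → ℝ} {c : NNReal}
    (hX : ProbabilityTheory.HasSubgaussianMGF X c ν) {ε : ℝ} (hε : 0 ≤ ε) :
    ν.real {ω | ε ≤ |X ω|} ≤ 2 * Real.exp (-ε ^ 2 / (2 * c)) := by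
  have tails : {ω | ε ≤ |X ω|} = {ω | ε ≤ X ω} ∪ {ω | ε ≤ (-X) ω} :=
    Set.ext fun ω => le_abs (a := ε) (b := X ω)
  rw [tails, two_mul]
  exact (measureReal_union_le _ _).trans
    (add_le_add (hX.measure_ge_le hε) (hX.neg.measure_ge_le hε))

end Concentration

section TalagrandCertificate

variable {n : ℕ} {𝓧 : Fin n → Type*} {f : (∀ j, 𝓧 j) → ℝ} {g : (∀ j, 𝓧 j) → Fin n → ℝ}

/-- The hypothesis of Talagrand's inequality: changing the coordinates of `x` in a set `J` lowers
`f` by at most the `g x`-weight of `J`, and the weight vectors `g x` have squared length at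
most `c`. -/
structure IsTalagrandCertificate (f : (∀ j, 𝓧 j) → ℝ) (g : (∀ j, 𝓧 j) → Fin n → ℝ)
    (c : ℝ) : Prop where
  sum_sq_le : ∀ x, ∑ j, g x j ^ 2 ≤ c
  sub_le : ∀ x y, f x - f y ≤ ∑ j with y j ≠ x j, g x j

namespace IsTalagrandCertificate

theorem isWeakInfConvMinorant {c : ℝ} (h : IsTalagrandCertificate f g c) {t : ℝ} (ht : 0 ≤ t) :
    IsWeakInfConvMinorant (fun x => t * f x - c * t ^ 2 / 2) fun x => t * f x := by
  intro x ι _ w Y hw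
  have average_le : f x - ∑ i, w i * f (Y i) ≤ ∑ j, g x j * movedMass x w Y j := by
    calc f x - ∑ i, w i * f (Y i) = ∑ i, w i * (f x - f (Y i)) := by
          simp only [mul_sub, Finset.sum_sub_distrib, ← Finset.sum_mul, hw.2, one_mul]
      _ ≤ ∑ i, w i * ∑ j with Y i j ≠ x j, g x j :=
          Finset.sum_le_sum fun i _ => mul_le_mul_of_nonneg_left (h.sub_le x (Y i)) (hw.1 i)
      _ = ∑ j, g x j * movedMass x w Y j := by
          simp only [movedMass, Finset.sum_filter, Finset.mul_sum, mul_ite, mul_zero]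
          rw [Finset.sum_comm]
          simp only [mul_comm]
  have young (j : Fin n) : t * (g x j * movedMass x w Y j) ≤
      g x j ^ 2 * (t ^ 2 / 2) + movedMass x w Y j ^ 2 / 2 := by
    linarith [two_mul_le_add_sq (t * g x j) (movedMass x w Y j)]
  have scaled_le : t * (f x - ∑ i, w i * f (Y i)) ≤ c * t ^ 2 / 2 + weakTransportCost x w Y := by
    calc t * (f x - ∑ i, w i * f (Y i)) ≤ ∑ j, t * (g x j * movedMass x w Y j) := by
          rw [← Finset.mul_sum]
          exact mul_le_mul_of_nonneg_left average_le ht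
      _ ≤ (∑ j, g x j ^ 2) * (t ^ 2 / 2) + weakTransportCost x w Y := by
          rw [Finset.sum_mul, weakTransportCost, ← Finset.sum_add_distrib]
          exact Finset.sum_le_sum fun j _ => young j
      _ ≤ c * t ^ 2 / 2 + weakTransportCost x w Y := by
          rw [mul_div_assoc]
          gcongr
          exact h.sum_sq_le x
  simp only [mul_left_comm (w _) t, ← Finset.mul_sum]
  linarith

variable [∀ j, MeasurableSpace (𝓧 j)]

theorem isBddMeasurable {c : ℝ} (h : IsTalagrandCertificate f g c) (hf : Measurable f) :
    IsBddMeasurable f := by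
  have sub_le_add (x y : ∀ j, 𝓧 j) : f x - f y ≤ n + c := by
    calc f x - f y ≤ ∑ j with y j ≠ x j, g x j := h.sub_le x y
      _ ≤ ∑ j, (1 + g x j ^ 2) :=
          (Finset.sum_le_sum fun j _ => by nlinarith [sq_nonneg (g x j - 1)]).trans
            (Finset.sum_le_univ_sum_of_nonneg fun j => by positivity)
      _ ≤ n + c := by simpa [Finset.sum_add_distrib] using h.sum_sq_le x
  rcases isEmpty_or_nonempty (∀ j, 𝓧 j) with _ | ⟨⟨y⟩⟩
  · exact ⟨hf, 0, isEmptyElim⟩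
  · refine ⟨hf, |f y| + (n + c), fun x => ?_⟩
    have dist_le : |f x - f y| ≤ n + c := abs_sub_le_iff.2 ⟨sub_le_add x y, sub_le_add y x⟩
    linarith [abs_sub_abs_le_abs_sub (f x) (f y)]

theorem hasSubgaussianMGF {c : NNReal} (h : IsTalagrandCertificate f g c) (hf : Measurable f)
    (μ : ∀ j, Measure (𝓧 j)) [∀ j, IsProbabilityMeasure (μ j)] :
    ProbabilityTheory.HasSubgaussianMGF (fun x => f x - ∫ y, f y ∂Measure.pi μ) c
      (Measure.pi μ) :=
  hasSubgaussianMGF_of_isWeakInfConvMinorant μ (h.isBddMeasurable hf)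
    fun _ ht => h.isWeakInfConvMinorant ht

end IsTalagrandCertificate

end TalagrandCertificate

section Selection

variable {𝓧 L J : Type*}

/-- The items that the selection `f` assigns to some slot of `L`; those of an optimal selection
certify the optimal value. -/
def selectedItems [Fintype J] (f : L → Option J) : Finset J :=
  {j | ∃ l, f l = some j}

theorem sum_elim_eq_sum_selectedItems [Fintype L] [Fintype J] {f : L → Option J}
    (hf : ∀ l l' j, f l = some j → f l' = some j → l = l') (a : J → ℝ) :
    ∑ l, (f l).elim 0 a = ∑ j ∈ selectedItems f, a j := by
  have elim_eq (l : L) : (f l).elim 0 a = ∑ j, if f l = some j then a j else 0 := by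
    cases f l <;> simp
  have sum_slots_eq (j : J) :
      (∑ l, if f l = some j then a j else 0) = if j ∈ selectedItems f then a j else 0 := by
    by_cases hj : ∃ l, f l = some j
    · obtain ⟨l, hl⟩ := hj
      have slot_iff (l' : L) : f l' = some j ↔ l = l' :=
        ⟨fun hl' => hf l l' j hl hl', fun hll' => hll' ▸ hl⟩
      simp [selectedItems, slot_iff]
    · rw [selectedItems, if_neg (by simpa using hj)]
      exact Finset.sum_eq_zero fun l _ => if_neg fun hl => hj ⟨l, hl⟩
  simp only [elim_eq]
  rw [Finset.sum_comm]
  simp only [sum_slots_eq, Finset.sum_ite_mem, Finset.univ_inter]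

/-- The selection `f` after transplantation from the sample `x` to the sample `y`: the items in
which `y` differs from `x` are replaced by dummies. -/
def transplant (x y : J → 𝓧) (f : L → Option J) (l : L) : Option J :=
  (f l).filter fun j => y j = x j

end Selection

section OptimalSelection

variable {𝓧 : Type*} {d n : ℕ} {kvec : Fin d → ℕ} {P : Fin d → Set 𝓧} {v : Fin d → 𝓧 → ℝ}

theorem feasibleSel_none (C : Fin n → 𝓧) : FeasibleSel d n kvec P C fun _ => none := by
  constructor <;> simp

theorem selValue_le_OPTval {C : Fin n → 𝓧} {f : ((i : Fin d) × Fin (kvec i)) → Option (Fin n)}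
    (hf : FeasibleSel d n kvec P C f) : selValue d n kvec v C f ≤ OPTval d n kvec P v C :=
  le_ciSup (f := fun f : {f // FeasibleSel d n kvec P C f} => selValue d n kvec v C f.1)
    (Set.finite_range _).bddAbove ⟨f, hf⟩

theorem exists_selValue_eq_OPTval (C : Fin n → 𝓧) :
    ∃ f, FeasibleSel d n kvec P C f ∧ selValue d n kvec v C f = OPTval d n kvec P v C := by
  have : Nonempty {f // FeasibleSel d n kvec P C f} := ⟨⟨_, feasibleSel_none C⟩⟩
  obtain ⟨⟨f, hf⟩, hopt⟩ := exists_eq_ciSup_of_finite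
    (f := fun f : {f // FeasibleSel d n kvec P C f} => selValue d n kvec v C f.1)
  exact ⟨f, hf, hopt⟩

theorem OPTval_nonneg (C : Fin n → 𝓧) : 0 ≤ OPTval d n kvec P v C := by
  simpa [selValue] using selValue_le_OPTval (v := v) (feasibleSel_none (P := P) C)

theorem OPTval_eq_iSup_ite (C : Fin n → 𝓧) :
    OPTval d n kvec P v C =
      ⨆ f, if FeasibleSel d n kvec P C f then selValue d n kvec v C f else 0 := by
  apply le_antisymm
  · obtain ⟨f, hf, hopt⟩ := exists_selValue_eq_OPTval (P := P) (v := v) (kvec := kvec) C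
    rw [← hopt]
    exact le_ciSup_of_le (Set.finite_range _).bddAbove f (if_pos hf).ge
  · refine ciSup_le fun f => ?_
    split_ifs with hf
    · exact selValue_le_OPTval hf
    · exact OPTval_nonneg C

theorem measurableSet_feasibleSel [MeasurableSpace 𝓧] (hP : ∀ i, MeasurableSet (P i))
    (f : ((i : Fin d) × Fin (kvec i)) → Option (Fin n)) :
    MeasurableSet {C | FeasibleSel d n kvec P C f} := by
  unfold FeasibleSel
  measurability

theorem measurable_selValue [MeasurableSpace 𝓧] (hv : ∀ i, Measurable (v i))
    (f : ((i : Fin d) × Fin (kvec i)) → Option (Fin n)) :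
    Measurable fun C => selValue d n kvec v C f := by
  refine Finset.measurable_sum _ fun l _ => ?_
  cases f l with
  | none => exact measurable_const
  | some j => exact (hv l.1).comp (measurable_pi_apply j)

theorem measurable_OPTval [MeasurableSpace 𝓧] (hP : ∀ i, MeasurableSet (P i))
    (hv : ∀ i, Measurable (v i)) : Measurable fun C : Fin n → 𝓧 => OPTval d n kvec P v C := by
  simp only [OPTval_eq_iSup_ite]
  exact .iSup fun f =>
    .ite (measurableSet_feasibleSel hP f) (measurable_selValue hv f) measurable_const

theorem FeasibleSel.transplant {x : Fin n → 𝓧}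
    {f : ((i : Fin d) × Fin (kvec i)) → Option (Fin n)} (hf : FeasibleSel d n kvec P x f)
    (y : Fin n → 𝓧) : FeasibleSel d n kvec P y (transplant x y f) := by
  simp only [FeasibleSel, _root_.transplant, Option.filter_eq_some_iff, decide_eq_true_eq]
  exact ⟨fun l j ⟨hlj, hj⟩ => hj ▸ hf.1 l j hlj, fun l l' j h h' => hf.2 l l' j h.1 h'.1⟩

theorem selValue_sub_selValue_transplant_le (hv1 : ∀ i, ∀ c ∈ P i, v i c ≤ 1) {x : Fin n → 𝓧}
    {f : ((i : Fin d) × Fin (kvec i)) → Option (Fin n)} (hf : FeasibleSel d n kvec P x f)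
    (y : Fin n → 𝓧) :
    selValue d n kvec v x f - selValue d n kvec v y (transplant x y f) ≤
      ∑ j ∈ selectedItems f, if y j ≠ x j then 1 else 0 := by
  rw [selValue, selValue, ← Finset.sum_sub_distrib, ← sum_elim_eq_sum_selectedItems hf.2]
  refine Finset.sum_le_sum fun l _ => ?_
  unfold transplant
  cases hl : f l with
  | none => simp
  | some j =>
    by_cases hj : y j = x j
    · simp [Option.filter, hj]
    · simpa [Option.filter, hj] using hv1 l.1 (x j) (hf.1 l j hl)

theorem exists_isTalagrandCertificate_OPTval (hv1 : ∀ i, ∀ c ∈ P i, v i c ≤ 1) :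
    ∃ g, IsTalagrandCertificate (𝓧 := fun _ : Fin n => 𝓧) (OPTval d n kvec P v) g
      ((∑ i, kvec i : ℕ) : ℝ) := by
  choose S feasible optimal using
    exists_selValue_eq_OPTval (n := n) (kvec := kvec) (P := P) (v := v)
  refine ⟨fun x j => if j ∈ selectedItems (S x) then 1 else 0, fun x => ?_, fun x y => ?_⟩
  · calc ∑ j, (if j ∈ selectedItems (S x) then (1 : ℝ) else 0) ^ 2
        = ∑ l, (S x l).elim (0 : ℝ) fun _ => 1 := by
          simp [sum_elim_eq_sum_selectedItems (feasible x).2]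
      _ ≤ ∑ _l : (i : Fin d) × Fin (kvec i), 1 :=
          Finset.sum_le_sum fun l _ => by cases S x l <;> simp
      _ = ((∑ i, kvec i : ℕ) : ℝ) := by simp
  · calc OPTval d n kvec P v x - OPTval d n kvec P v y
        ≤ selValue d n kvec v x (S x) - selValue d n kvec v y (transplant x y (S x)) := by
          rw [optimal]
          exact sub_le_sub_left (selValue_le_OPTval ((feasible x).transplant y)) _
      _ ≤ ∑ j ∈ selectedItems (S x), if y j ≠ x j then 1 else 0 :=
          selValue_sub_selValue_transplant_le hv1 (feasible x) y
      _ = ∑ j with y j ≠ x j, if j ∈ selectedItems (S x) then 1 else 0 := by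
          rw [← Finset.sum_filter, ← Finset.sum_filter]
          congr 1
          ext j
          simp [and_comm]

theorem hasSubgaussianMGF_OPTval [MeasurableSpace 𝓧] (μ : Fin n → Measure 𝓧)
    [∀ j, IsProbabilityMeasure (μ j)] (hP : ∀ i, MeasurableSet (P i))
    (hv : ∀ i, Measurable (v i)) (hv1 : ∀ i, ∀ c ∈ P i, v i c ≤ 1) :
    ProbabilityTheory.HasSubgaussianMGF
      (fun C => OPTval d n kvec P v C - ∫ C', OPTval d n kvec P v C' ∂Measure.pi μ)
      (∑ i, kvec i : ℕ) (Measure.pi μ) := by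
  obtain ⟨g, hg⟩ := exists_isTalagrandCertificate_OPTval (n := n) (kvec := kvec) hv1
  rw [← NNReal.coe_natCast] at hg
  exact hg.hasSubgaussianMGF (measurable_OPTval hP hv) μ

end OptimalSelection

theorem stmt8_general {𝓧 : Type*} [MeasurableSpace 𝓧] {n : ℕ} (μ : Fin n → Measure 𝓧)
    [∀ j, IsProbabilityMeasure (μ j)] (d k : ℕ) (kvec : Fin d → ℕ) (hk : ∑ i, kvec i = k)
    (_hkpos : 0 < k)
    (P : Fin d → Set 𝓧) (hP : ∀ i, MeasurableSet (P i))
    (v : Fin d → 𝓧 → ℝ) (hv : ∀ i, Measurable (v i)) (hv1 : ∀ i, ∀ c ∈ P i, v i c ≤ 1)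
    (α : ℝ) (hα : 0 ≤ α) :
    Measure.pi μ
        {C | α ≤ |OPTval d n kvec P v C - ∫ C', OPTval d n kvec P v C' ∂Measure.pi μ|}
      ≤ ENNReal.ofReal (2 * Real.exp (-α ^ 2 / (2 * k))) := by
  subst hk
  rw [← ofReal_measureReal]
  exact ENNReal.ofReal_le_ofReal <| by
    simpa using
      measureReal_abs_ge_le_of_hasSubgaussianMGF (hasSubgaussianMGF_OPTval μ hP hv hv1) hα

/-- concentration of the optimal value: for `C ∼ Dⁿ`,
`Pr[|OPT(C) − E OPT(C)| ≥ α] ≤ 2 exp(−α²/2k)` where `k = ∑ kᵢ`. -/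
theorem stmt8 {𝓧 : Type*} [MeasurableSpace 𝓧] (μ : Measure 𝓧)
    [IsProbabilityMeasure μ] (d n k : ℕ) (kvec : Fin d → ℕ) (hk : ∑ i, kvec i = k)
    (hkpos : 0 < k)
    (P : Fin d → Set 𝓧) (hP : ∀ i, MeasurableSet (P i))
    (v : Fin d → 𝓧 → ℝ) (hvmeas : ∀ i, Measurable (v i))
    (hv01 : ∀ i c, c ∈ P i → v i c ∈ Set.Icc (0 : ℝ) 1)
    (α : ℝ) (hα : 0 < α) :
    (Measure.pi fun _ : Fin n => μ)
        {C | α ≤ |OPTval d n kvec P v C -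
          ∫ C', OPTval d n kvec P v C' ∂(Measure.pi fun _ : Fin n => μ)|}
      ≤ ENNReal.ofReal (2 * Real.exp (-α ^ 2 / (2 * k))) := by
  exact stmt8_general (fun _ => μ) d k kvec hk hkpos P hP v hvmeas
    (fun i c hc => (hv01 i c hc).2) α hα.le
end
end
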